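/- There exist constants C > 0 and λ₀ > 0, depending only on α and β, such that for every real Dirichlet quasimode datum (u, λ, f) on the stadium S with λ ≥ λ₀ and ‖u‖_{L²(S)} = 1, one has λ² ‖f‖²_{L²(S)} + λ⁴ ‖u‖²_{L²(W)} ≥ C, where ‖u‖_{L²(W)} is the L² norm of u over the wings W. -/

import Mathlib

open MeasureTheory Real Set Filter

noncomputable section

/-- Partial derivative in the first (x) variable. -/
def pdx (u : ℝ × ℝ → ℝ) (p : ℝ × ℝ) : ℝ := deriv (fun t => u (t, p.2)) p.1

/-- Partial derivative in the second (y) variable. -/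
def pdy (u : ℝ × ℝ → ℝ) (p : ℝ × ℝ) : ℝ := deriv (fun t => u (p.1, t)) p.2

/-- The positive Laplacian `Δu = -u_xx - u_yy`. -/
def lap (u : ℝ × ℝ → ℝ) (p : ℝ × ℝ) : ℝ := -(pdx (pdx u) p) - (pdy (pdy u) p)

/-- The central rectangle `R = [-α,α] × [-β,β]`. -/
def Rect (α β : ℝ) : Set (ℝ × ℝ) := Icc (-α) α ×ˢ Icc (-β) β

/-- The wings `W = W₊ ∪ W₋`, two half-discs of radius β centered at `(±α, 0)`. -/
def Wings (α β : ℝ) : Set (ℝ × ℝ) :=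
  {p | (p.1 - α) ^ 2 + p.2 ^ 2 ≤ β ^ 2 ∧ α ≤ p.1} ∪
  {p | (p.1 + α) ^ 2 + p.2 ^ 2 ≤ β ^ 2 ∧ p.1 ≤ -α}

/-- The Bunimovich stadium `S = R ∪ W`. -/
def Stadium (α β : ℝ) : Set (ℝ × ℝ) := Rect α β ∪ Wings α β

/-- The boundary `∂S`: two horizontal segments and two semicircles. -/
def StadiumBoundary (α β : ℝ) : Set (ℝ × ℝ) :=
  {p | |p.1| ≤ α ∧ (p.2 = β ∨ p.2 = -β)} ∪
  {p | (|p.1| - α) ^ 2 + p.2 ^ 2 = β ^ 2 ∧ α ≤ |p.1|}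

/-- Boundary integral `∫_{∂S} g dl` of an integrand `g` depending on the boundary point
and the outward unit normal at that point. -/
def bdryInt (α β : ℝ) (g : ℝ × ℝ → ℝ × ℝ → ℝ) : ℝ :=
  (∫ x in (-α)..α, (g (x, β) (0, 1) + g (x, -β) (0, -1))) +
  β * ∫ θ in (-(π / 2))..(π / 2),
    (g (α + β * cos θ, β * sin θ) (cos θ, sin θ) +
     g (-(α + β * cos θ), β * sin θ) (-cos θ, sin θ))

/-- Boundary integral `∫_{∂S ∩ W} g dl` over the two semicircles only. -/
def bdryIntW (α β : ℝ) (g : ℝ × ℝ → ℝ × ℝ → ℝ) : ℝ :=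
  β * ∫ θ in (-(π / 2))..(π / 2),
    (g (α + β * cos θ, β * sin θ) (cos θ, sin θ) +
     g (-(α + β * cos θ), β * sin θ) (-cos θ, sin θ))

/-- The normal derivative `∂_N u = n₁ ∂_x u + n₂ ∂_y u` at a boundary point `p`
with outward unit normal `n`. -/
def nderiv (u : ℝ × ℝ → ℝ) (p n : ℝ × ℝ) : ℝ := n.1 * pdx u p + n.2 * pdy u p

/-- A real Dirichlet quasimode datum `(u, λ, f)` on the stadium: `λ > 0`, `u` smooth on a
neighborhood of `S`, `u = 0` on `∂S`, and `(Δ - λ²) u = f` on `S`. -/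
structure QMDatum (α β : ℝ) where
  u : ℝ × ℝ → ℝ
  lam : ℝ
  f : ℝ × ℝ → ℝ
  lam_pos : 0 < lam
  smooth : ∃ V : Set (ℝ × ℝ), IsOpen V ∧ Stadium α β ⊆ V ∧ ContDiffOn ℝ (⊤ : ℕ∞) u V
  dirichlet : ∀ p ∈ StadiumBoundary α β, u p = 0
  eqn : ∀ p ∈ Stadium α β, lap u p - lam ^ 2 * u p = f p

/-!
The quantity to control is `∫ u_x²` over `S`: Poincaré's inequality in `x` then bounds `∫ u²`.

The vector field `(A(x), -c(x) y)` with `A = x (1 - w² / β²)` and `|c| = |x| w / β²` is tangent to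
`∂S` and equals `(x, 0)` on the rectangle. Multiplying `(Δ - λ²) u = f` by its action on `u`, plus
`u / 2`, gives a Rellich identity without boundary terms, because `u` vanishes along `∂S`. On the
rectangle its quadratic form is exactly `u_x²`, so `∫ u_x²` is bounded by `∫ f²` and by the energy
and `λ² u²` on the wings.

The gradient on the wings is bounded by the energy identity with a cutoff in `x`. A cutoff at scale
`1 / λ` costs a fixed multiple of `∫ u_x²`, because the only control on `u²` near an edge of the
rectangle, beyond the mass on the wings, is the Hardy inequality in `x`. A logarithmic cutoff
lowers this cost to `ε ∫ u_x²`, at the price of a factor of order `ε exp (1 / ε)` in front of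
`(1 + λ²) ∫_W u²`, and for small `ε` it is absorbed.

The weights have kinks at `x = ±α`, so every integration by parts is done in one variable at a time,
on the slices of a convex domain.
-/

section PartialDerivatives

variable {u v : ℝ × ℝ → ℝ} {p : ℝ × ℝ} {n m : WithTop ℕ∞}

lemma hasDerivAt_comp_curve {X Y : ℝ → ℝ} {X' Y' t : ℝ}
    (hu : DifferentiableAt ℝ u (X t, Y t)) (hX : HasDerivAt X X' t) (hY : HasDerivAt Y Y' t) :
    HasDerivAt (fun s => u (X s, Y s)) (fderiv ℝ u (X t, Y t) (X', Y')) t :=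
  hu.hasFDerivAt.comp_hasDerivAt t (hX.prodMk hY)

lemma pdx_eq_fderiv_apply (hu : DifferentiableAt ℝ u p) : pdx u p = fderiv ℝ u p (1, 0) :=
  (hasDerivAt_comp_curve hu (hasDerivAt_id p.1) (hasDerivAt_const p.1 p.2)).deriv

lemma pdy_eq_fderiv_apply (hu : DifferentiableAt ℝ u p) : pdy u p = fderiv ℝ u p (0, 1) :=
  (hasDerivAt_comp_curve hu (hasDerivAt_const p.2 p.1) (hasDerivAt_id p.2)).deriv

lemma fderiv_apply_eq_pdx_pdy (hu : DifferentiableAt ℝ u p) (a b : ℝ) :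
    fderiv ℝ u p (a, b) = a * pdx u p + b * pdy u p := by
  have hab : (a, b) = a • ((1, 0) : ℝ × ℝ) + b • ((0, 1) : ℝ × ℝ) := by simp
  rw [pdx_eq_fderiv_apply hu, pdy_eq_fderiv_apply hu, hab, map_add, map_smul, map_smul,
    smul_eq_mul, smul_eq_mul]

lemma hasDerivAt_fst (hu : DifferentiableAt ℝ u p) :
    HasDerivAt (fun t => u (t, p.2)) (pdx u p) p.1 := by
  rw [pdx_eq_fderiv_apply hu]
  exact hasDerivAt_comp_curve hu (hasDerivAt_id p.1) (hasDerivAt_const p.1 p.2)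

lemma hasDerivAt_snd (hu : DifferentiableAt ℝ u p) :
    HasDerivAt (fun t => u (p.1, t)) (pdy u p) p.2 := by
  rw [pdy_eq_fderiv_apply hu]
  exact hasDerivAt_comp_curve hu (hasDerivAt_const p.2 p.1) (hasDerivAt_id p.2)

lemma contDiff_pdx (hu : ContDiff ℝ n u) (hmn : m + 1 ≤ n) : ContDiff ℝ m (pdx u) := by
  have hdiff : Differentiable ℝ u := (hu.of_le (le_add_self.trans hmn)).differentiable one_ne_zero
  rw [show pdx u = _ from funext fun p => pdx_eq_fderiv_apply (hdiff p)]
  exact (hu.fderiv_right hmn).clm_apply contDiff_const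

lemma contDiff_pdy (hu : ContDiff ℝ n u) (hmn : m + 1 ≤ n) : ContDiff ℝ m (pdy u) := by
  have hdiff : Differentiable ℝ u := (hu.of_le (le_add_self.trans hmn)).differentiable one_ne_zero
  rw [show pdy u = _ from funext fun p => pdy_eq_fderiv_apply (hdiff p)]
  exact (hu.fderiv_right hmn).clm_apply contDiff_const

lemma pdy_pdx_comm (hu : ContDiff ℝ 2 u) (p : ℝ × ℝ) : pdy (pdx u) p = pdx (pdy u) p := by
  have hdiff : Differentiable ℝ u := hu.differentiable two_ne_zero
  have hfderiv : DifferentiableAt ℝ (fderiv ℝ u) p :=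
    (hu.fderiv_right (m := 1) (by norm_num)).differentiable one_ne_zero p
  have hsymm : IsSymmSndFDerivAt ℝ u p := hu.contDiffAt.isSymmSndFDerivAt (by simp)
  have hxd := (contDiff_pdx hu (m := 1) (by norm_num)).differentiable one_ne_zero p
  have hyd := (contDiff_pdy hu (m := 1) (by norm_num)).differentiable one_ne_zero p
  rw [pdy_eq_fderiv_apply hxd, pdx_eq_fderiv_apply hyd,
    show pdx u = _ from funext fun q => pdx_eq_fderiv_apply (hdiff q),
    show pdy u = _ from funext fun q => pdy_eq_fderiv_apply (hdiff q),
    fderiv_clm_apply hfderiv (differentiableAt_const _),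
    fderiv_clm_apply hfderiv (differentiableAt_const _)]
  simpa using hsymm.eq (0, 1) (1, 0)

lemma continuous_lap (hu : ContDiff ℝ 2 u) : Continuous (lap u) := by
  have hxx := contDiff_pdx (contDiff_pdx hu (m := 1) (by norm_num)) (m := 0) (by norm_num)
  have hyy := contDiff_pdy (contDiff_pdy hu (m := 1) (by norm_num)) (m := 0) (by norm_num)
  exact hxx.continuous.neg.sub hyy.continuous

lemma pdx_eventuallyEq (h : u =ᶠ[nhds p] v) : pdx u =ᶠ[nhds p] pdx v := by
  filter_upwards [h.eventually_nhds] with q hq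
  have hcont : Continuous fun t : ℝ => (t, q.2) := by fun_prop
  exact EventuallyEq.deriv_eq (hcont.continuousAt.eventually hq)

lemma pdy_eventuallyEq (h : u =ᶠ[nhds p] v) : pdy u =ᶠ[nhds p] pdy v := by
  filter_upwards [h.eventually_nhds] with q hq
  have hcont : Continuous fun t : ℝ => (q.1, t) := by fun_prop
  exact EventuallyEq.deriv_eq (hcont.continuousAt.eventually hq)

lemma lap_congr (h : u =ᶠ[nhds p] v) : lap u p = lap v p := by
  unfold lap
  rw [(pdx_eventuallyEq (pdx_eventuallyEq h)).eq_of_nhds,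
    (pdy_eventuallyEq (pdy_eventuallyEq h)).eq_of_nhds]

end PartialDerivatives

section IntegralZero

variable {X : Type*} [MeasurableSpace X] {μ : Measure X}

/-- The space of integrable functions whose integral vanishes. Each integration by parts is recorded
as membership in this space, so that identities can be combined linearly. -/
def integralZero (μ : Measure X) : Submodule ℝ (X → ℝ) where
  carrier := {E | Integrable E μ ∧ ∫ x, E x ∂μ = 0}
  zero_mem' := ⟨integrable_zero X ℝ μ, integral_zero X ℝ⟩
  add_mem' := fun hE hF =>
    ⟨hE.1.add hF.1, (integral_add hE.1 hF.1).trans (by rw [hE.2, hF.2, add_zero])⟩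
  smul_mem' := fun c _ hE =>
    ⟨hE.1.smul c, (integral_smul c _).trans (by rw [hE.2, smul_zero])⟩

lemma integral_le_of_le_add_integralZero {F G E : X → ℝ} (hE : E ∈ integralZero μ)
    (hF : Integrable F μ) (hG : Integrable G μ) (h : ∀ᵐ x ∂μ, F x ≤ G x + E x) :
    ∫ x, F x ∂μ ≤ ∫ x, G x ∂μ :=
  calc ∫ x, F x ∂μ ≤ ∫ x, (G x + E x) ∂μ := integral_mono_ae hF (hG.add hE.1) h
    _ = ∫ x, G x ∂μ := by rw [integral_add hG hE.1, hE.2, add_zero]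

end IntegralZero

section ConvexDomains

lemma setIntegral_eq_zero_of_hasDerivAt {K s : Set ℝ} {F F' : ℝ → ℝ} (hK : IsCompact K)
    (hKc : K.OrdConnected) (hs : s.Countable) (hF : Continuous F) (h0 : ∀ x ∈ frontier K, F x = 0)
    (hderiv : ∀ x ∉ s, HasDerivAt F (F' x) x) (hF' : IntegrableOn F' K) :
    ∫ x in K, F' x = 0 := by
  rcases K.eq_empty_or_nonempty with rfl | hne
  · simp
  have hIcc := eq_Icc_of_connected_compact ⟨hne, hKc.isPreconnected⟩ hK
  generalize sInf K = a, sSup K = b at hIcc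
  subst hIcc
  have hab : a ≤ b := nonempty_Icc.1 hne
  rw [frontier_Icc hab] at h0
  rw [integral_Icc_eq_integral_Ioc, ← intervalIntegral.integral_of_le hab,
    integral_eq_of_hasDerivAt_off_countable_of_le F F' hab hs hF.continuousOn
      (fun x hx => hderiv x hx.2)
      ((intervalIntegrable_iff_integrableOn_Icc_of_le hab).2 hF'),
    h0 a (mem_insert _ _), h0 b (mem_insert_of_mem _ rfl), sub_zero]

variable {Ω : Set (ℝ × ℝ)} {s : Set ℝ} {F D : ℝ × ℝ → ℝ}

theorem mem_integralZero_of_hasDerivAt_fst (hΩ : IsCompact Ω) (hconv : Convex ℝ Ω)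
    (hs : s.Countable) (hF : Continuous F) (h0 : ∀ p ∈ frontier Ω, F p = 0)
    (hderiv : ∀ p : ℝ × ℝ, p.1 ∉ s → HasDerivAt (fun t => F (t, p.2)) (D p) p.1)
    (hD : IntegrableOn D Ω) : D ∈ integralZero (volume.restrict Ω) := by
  refine ⟨hD, ?_⟩
  have hind : Integrable (Ω.indicator D) (volume.prod volume) :=
    (integrable_indicator_iff hΩ.measurableSet).2 hD
  rw [← integral_indicator hΩ.measurableSet, Measure.volume_eq_prod, integral_prod_symm _ hind]
  refine integral_eq_zero_of_ae (hind.prod_left_ae.mono fun y hy => ?_)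
  have hline : Continuous fun x : ℝ => (x, y) := by fun_prop
  set K : Set ℝ := (fun x => (x, y)) ⁻¹' Ω with hKdef
  have hK : IsCompact K :=
    (hΩ.image continuous_fst).of_isClosed_subset (hΩ.isClosed.preimage hline)
      fun x hx => ⟨(x, y), hx, rfl⟩
  have hKc : K.OrdConnected := by
    refine Convex.ordConnected fun x hx x' hx' a b ha hb hab => ?_
    simpa [hKdef, ← add_mul, hab] using hconv hx hx' ha hb hab
  have hyK : IntegrableOn (fun x => D (x, y)) K := (integrable_indicator_iff hK.measurableSet).1 hy
  rw [Pi.zero_apply]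
  change ∫ x, K.indicator (fun x => D (x, y)) x = 0
  rw [integral_indicator hK.measurableSet]
  exact setIntegral_eq_zero_of_hasDerivAt hK hKc hs (hF.comp hline)
    (fun x hx => h0 _ (hline.frontier_preimage_subset Ω hx)) (fun x hx => hderiv (x, y) hx) hyK

theorem mem_integralZero_of_hasDerivAt_snd (hΩ : IsCompact Ω) (hconv : Convex ℝ Ω)
    (hs : s.Countable) (hF : Continuous F) (h0 : ∀ p ∈ frontier Ω, F p = 0)
    (hderiv : ∀ p : ℝ × ℝ, p.2 ∉ s → HasDerivAt (fun t => F (p.1, t)) (D p) p.2)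
    (hD : IntegrableOn D Ω) : D ∈ integralZero (volume.restrict Ω) := by
  have hswap : MeasurePreserving (Prod.swap : ℝ × ℝ → ℝ × ℝ) := Measure.measurePreserving_swap
  have hemb : MeasurableEmbedding (Prod.swap : ℝ × ℝ → ℝ × ℝ) :=
    MeasurableEquiv.prodComm.measurableEmbedding
  have hswapped : D ∘ Prod.swap ∈ integralZero (volume.restrict (Prod.swap ⁻¹' Ω)) := by
    refine mem_integralZero_of_hasDerivAt_fst (F := F ∘ Prod.swap)
      ((Homeomorph.prodComm ℝ ℝ).isCompact_preimage.2 hΩ)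
      (hconv.linear_preimage (LinearEquiv.prodComm ℝ ℝ ℝ).toLinearMap) hs
      (hF.comp continuous_swap)
      (fun p hp => h0 p.swap (continuous_swap.frontier_preimage_subset Ω hp))
      (fun p hp => hderiv p.swap hp) ((hswap.integrableOn_comp_preimage hemb).2 hD)
  exact ⟨hD, (hswap.setIntegral_preimage_emb hemb D Ω).symm.trans hswapped.2⟩

end ConvexDomains

section PiecewiseDerivatives

/-- `φ` is a continuous function whose derivative is `φ'` off a countable set, with `φ'` locally
integrable; the weights and cutoffs used here have kinks at finitely many points. -/
structure HasPiecewiseDeriv (φ φ' : ℝ → ℝ) : Prop where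
  continuous : Continuous φ
  hasDerivAt : ∃ s : Set ℝ, s.Countable ∧ ∀ x ∉ s, HasDerivAt φ (φ' x) x
  locallyIntegrable : LocallyIntegrable φ'

namespace HasPiecewiseDeriv

variable {φ φ' ψ ψ' : ℝ → ℝ}

lemma of_hasDerivAt (h : ∀ x, HasDerivAt φ (φ' x) x) (hφ' : Continuous φ') :
    HasPiecewiseDeriv φ φ' :=
  ⟨continuous_iff_continuousAt.2 fun x => (h x).continuousAt, ⟨∅, countable_empty, fun x _ => h x⟩,
    hφ'.locallyIntegrable⟩

lemma add (hφ : HasPiecewiseDeriv φ φ') (hψ : HasPiecewiseDeriv ψ ψ') :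
    HasPiecewiseDeriv (fun x => φ x + ψ x) (fun x => φ' x + ψ' x) := by
  obtain ⟨s, hs, hφs⟩ := hφ.hasDerivAt
  obtain ⟨t, ht, hψt⟩ := hψ.hasDerivAt
  exact ⟨hφ.continuous.add hψ.continuous, ⟨s ∪ t, hs.union ht, fun x hx =>
    (hφs x fun h => hx (.inl h)).add (hψt x fun h => hx (.inr h))⟩,
    hφ.locallyIntegrable.add hψ.locallyIntegrable⟩

lemma mul (hφ : HasPiecewiseDeriv φ φ') (hψ : HasPiecewiseDeriv ψ ψ') :
    HasPiecewiseDeriv (fun x => φ x * ψ x) (fun x => φ' x * ψ x + φ x * ψ' x) := by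
  obtain ⟨s, hs, hφs⟩ := hφ.hasDerivAt
  obtain ⟨t, ht, hψt⟩ := hψ.hasDerivAt
  exact ⟨hφ.continuous.mul hψ.continuous, ⟨s ∪ t, hs.union ht, fun x hx =>
    (hφs x fun h => hx (.inl h)).mul (hψt x fun h => hx (.inr h))⟩,
    (hφ.locallyIntegrable.mul_continuous hψ.continuous).add
      (hψ.locallyIntegrable.continuous_mul hφ.continuous)⟩

lemma const_mul (c : ℝ) (hφ : HasPiecewiseDeriv φ φ') :
    HasPiecewiseDeriv (fun x => c * φ x) (fun x => c * φ' x) := by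
  obtain ⟨s, hs, hφs⟩ := hφ.hasDerivAt
  exact ⟨hφ.continuous.const_mul c, ⟨s, hs, fun x hx => (hφs x hx).const_mul c⟩,
    hφ.locallyIntegrable.smul c⟩

lemma comp {g g' : ℝ → ℝ} (hφ : HasPiecewiseDeriv φ φ')
    (hg : ∀ x, HasDerivAt g (g' (φ x)) (φ x)) (hg' : Continuous fun x => g' (φ x)) :
    HasPiecewiseDeriv (fun x => g (φ x)) (fun x => g' (φ x) * φ' x) := by
  obtain ⟨s, hs, hφs⟩ := hφ.hasDerivAt
  exact ⟨continuous_iff_continuousAt.2 fun x =>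
      ContinuousAt.comp (g := g) (hg x).continuousAt hφ.continuous.continuousAt,
    ⟨s, hs, fun x hx => (hg x).comp x (hφs x hx)⟩, hφ.locallyIntegrable.continuous_mul hg'⟩

lemma hasDerivAt_of_continuous (hφ : HasPiecewiseDeriv φ φ') (hφ' : Continuous φ') (x : ℝ) :
    HasDerivAt φ (φ' x) x := by
  obtain ⟨s, hs, hφs⟩ := hφ.hasDerivAt
  have hprimitive : φ = fun y => φ 0 + ∫ t in (0 : ℝ)..y, φ' t := by
    ext y
    rw [integral_eq_of_hasDerivAt_off_countable φ φ' hs hφ.continuous.continuousOn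
      (fun t ht => hφs t ht.2) (hφ'.intervalIntegrable 0 y), add_sub_cancel]
  rw [hprimitive]
  exact (hφ'.integral_hasStrictDerivAt 0 x).hasDerivAt.const_add _

lemma integrableOn_fst_mul {Ω : Set (ℝ × ℝ)} {G : ℝ × ℝ → ℝ} (hφ : HasPiecewiseDeriv φ φ')
    (hΩ : IsCompact Ω) (hG : Continuous G) : IntegrableOn (fun p => φ' p.1 * G p) Ω := by
  have hfst := hΩ.image continuous_fst
  have hsnd := hΩ.image continuous_snd
  have : IsFiniteMeasure (volume.restrict (Prod.snd '' Ω)) :=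
    isFiniteMeasure_restrict.2 hsnd.measure_lt_top.ne
  have hprod : IntegrableOn (fun p : ℝ × ℝ => φ' p.1) ((Prod.fst '' Ω) ×ˢ (Prod.snd '' Ω)) := by
    rw [IntegrableOn, Measure.volume_eq_prod, ← Measure.prod_restrict]
    exact (hφ.locallyIntegrable.integrableOn_isCompact hfst).comp_fst _
  exact (hprod.mono_set subset_prod).mul_continuousOn hG.continuousOn hΩ

end HasPiecewiseDeriv

end PiecewiseDerivatives

section HelmholtzIdentities

variable {u v : ℝ × ℝ → ℝ} {p : ℝ × ℝ}

/-- The squared length of the gradient of `u`. -/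
def gradSq (u : ℝ × ℝ → ℝ) (p : ℝ × ℝ) : ℝ := pdx u p ^ 2 + pdy u p ^ 2

/-- The Helmholtz operator `(Δ - l²) u`, for the positive Laplacian. -/
def helmholtz (l : ℝ) (u : ℝ × ℝ → ℝ) (p : ℝ × ℝ) : ℝ := lap u p - l ^ 2 * u p

lemma continuous_gradSq (hu : ContDiff ℝ 1 u) : Continuous (gradSq u) := by
  have hx := (contDiff_pdx hu (m := 0) (by norm_num)).continuous
  have hy := (contDiff_pdy hu (m := 0) (by norm_num)).continuous
  exact (hx.pow 2).add (hy.pow 2)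

lemma continuous_helmholtz (hu : ContDiff ℝ 2 u) (l : ℝ) : Continuous (helmholtz l u) :=
  (continuous_lap hu).sub (hu.continuous.const_mul _)

lemma pdx_mul (hu : DifferentiableAt ℝ u p) (hv : DifferentiableAt ℝ v p) :
    pdx (fun q => u q * v q) p = pdx u p * v p + u p * pdx v p :=
  ((hasDerivAt_fst hu).mul (hasDerivAt_fst hv)).deriv

lemma pdy_mul (hu : DifferentiableAt ℝ u p) (hv : DifferentiableAt ℝ v p) :
    pdy (fun q => u q * v q) p = pdy u p * v p + u p * pdy v p :=
  ((hasDerivAt_snd hu).mul (hasDerivAt_snd hv)).deriv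

variable {Ω : Set (ℝ × ℝ)} {φ φ' : ℝ → ℝ} {G : ℝ × ℝ → ℝ}

lemma mul_pdx_mem_integralZero (hΩ : IsCompact Ω) (hconv : Convex ℝ Ω)
    (hφ : HasPiecewiseDeriv φ φ') (hG : ContDiff ℝ 1 G) (h0 : ∀ p ∈ frontier Ω, G p = 0) :
    (fun p => φ' p.1 * G p + φ p.1 * pdx G p) ∈ integralZero (volume.restrict Ω) := by
  obtain ⟨s, hs, hφs⟩ := hφ.hasDerivAt
  have hφc : Continuous fun p : ℝ × ℝ => φ p.1 := hφ.continuous.comp continuous_fst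
  have hGx := (contDiff_pdx hG (m := 0) (by norm_num)).continuous
  exact mem_integralZero_of_hasDerivAt_fst hΩ hconv hs (hφc.mul hG.continuous)
    (fun p hp => mul_eq_zero_of_right _ (h0 p hp))
    (fun p hp => (hφs p.1 hp).mul (hasDerivAt_fst (hG.differentiable one_ne_zero p)))
    ((hφ.integrableOn_fst_mul hΩ hG.continuous).add
      ((hφc.mul hGx).continuousOn.integrableOn_compact hΩ))

lemma mul_pdy_mem_integralZero (hΩ : IsCompact Ω) (hconv : Convex ℝ Ω)
    (hφ : Continuous φ) (hG : ContDiff ℝ 1 G) (h0 : ∀ p ∈ frontier Ω, G p = 0) :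
    (fun p => φ p.1 * pdy G p) ∈ integralZero (volume.restrict Ω) := by
  have hφc : Continuous fun p : ℝ × ℝ => φ p.1 := hφ.comp continuous_fst
  have hGy := (contDiff_pdy hG (m := 0) (by norm_num)).continuous
  exact mem_integralZero_of_hasDerivAt_snd hΩ hconv countable_empty (hφc.mul hG.continuous)
    (fun p hp => mul_eq_zero_of_right _ (h0 p hp))
    (fun p _ => (hasDerivAt_snd (hG.differentiable one_ne_zero p)).const_mul (φ p.1))
    ((hφc.mul hGy).continuousOn.integrableOn_compact hΩ)

theorem energy_identity (hΩ : IsCompact Ω) (hconv : Convex ℝ Ω) (hφ : HasPiecewiseDeriv φ φ')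
    (hu : ContDiff ℝ 2 u) (h0 : ∀ p ∈ frontier Ω, u p = 0) :
    (fun p => φ' p.1 * (u p * pdx u p) + φ p.1 * (gradSq u p - u p * lap u p)) ∈
      integralZero (volume.restrict Ω) := by
  have hu1 : ContDiff ℝ 1 u := hu.of_le one_le_two
  have hux : ContDiff ℝ 1 (pdx u) := contDiff_pdx hu (by norm_num)
  have huy : ContDiff ℝ 1 (pdy u) := contDiff_pdy hu (by norm_num)
  convert add_mem
    (mul_pdx_mem_integralZero hΩ hconv hφ (hu1.mul hux) fun p hp => by rw [h0 p hp, zero_mul])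
    (mul_pdy_mem_integralZero hΩ hconv hφ.continuous (hu1.mul huy)
      fun p hp => by rw [h0 p hp, zero_mul]) using 1
  funext p
  have hd := hu1.differentiable one_ne_zero p
  rw [Pi.add_apply, pdx_mul hd (hux.differentiable one_ne_zero p),
    pdy_mul hd (huy.differentiable one_ne_zero p), gradSq, lap]
  ring

theorem integral_hardy_le (hΩ : IsCompact Ω) (hconv : Convex ℝ Ω) {q q' : ℝ → ℝ}
    (hq : HasPiecewiseDeriv q q') (hu : ContDiff ℝ 1 u) (h0 : ∀ p ∈ frontier Ω, u p = 0) :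
    ∫ p in Ω, (q' p.1 - q p.1 ^ 2 / 2) * u p ^ 2 ≤ 2 * ∫ p in Ω, pdx u p ^ 2 := by
  have hux := (contDiff_pdx hu (m := 0) (by norm_num)).continuous
  have hqc : Continuous fun p : ℝ × ℝ => q p.1 := hq.continuous.comp continuous_fst
  have hparts := mul_pdx_mem_integralZero hΩ hconv hq (hu.mul hu)
    fun p hp => by rw [h0 p hp, zero_mul]
  rw [← integral_const_mul]
  refine integral_le_of_le_add_integralZero hparts ?_
    ((hux.pow 2).const_mul 2 |>.continuousOn.integrableOn_compact hΩ) (ae_of_all _ fun p => ?_)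
  · simp only [sub_mul]
    exact (hq.integrableOn_fst_mul hΩ (hu.continuous.pow 2)).sub
      ((hqc.pow 2 |>.div_const 2).mul (hu.continuous.pow 2) |>.continuousOn.integrableOn_compact hΩ)
  · have hd := hu.differentiable one_ne_zero p
    rw [pdx_mul hd hd]
    nlinarith [sq_nonneg (q p.1 * u p + 2 * pdx u p)]

theorem integral_poincare_le (hΩ : IsCompact Ω) (hconv : Convex ℝ Ω) {B : ℝ} (hB : 0 < B)
    (hΩB : ∀ p ∈ Ω, |p.1| ≤ B) (hu : ContDiff ℝ 1 u) (h0 : ∀ p ∈ frontier Ω, u p = 0) :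
    ∫ p in Ω, u p ^ 2 ≤ 4 * B ^ 2 * ∫ p in Ω, pdx u p ^ 2 := by
  have hq : HasPiecewiseDeriv (fun x => x / B ^ 2) (fun _ => 1 / B ^ 2) :=
    .of_hasDerivAt (fun x => (hasDerivAt_id x).div_const _) continuous_const
  have hhardy := integral_hardy_le hΩ hconv hq hu h0
  have huc := hu.continuous
  have hlower : ∫ p in Ω, 1 / (2 * B ^ 2) * u p ^ 2 ≤
      ∫ p in Ω, (1 / B ^ 2 - (p.1 / B ^ 2) ^ 2 / 2) * u p ^ 2 := by
    refine setIntegral_mono_on ((by fun_prop : Continuous _).continuousOn.integrableOn_compact hΩ)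
      ((by fun_prop : Continuous _).continuousOn.integrableOn_compact hΩ) hΩ.measurableSet
      fun p hp => mul_le_mul_of_nonneg_right ?_ (sq_nonneg _)
    have hsq : p.1 ^ 2 ≤ B ^ 2 := sq_le_sq' (abs_le.1 (hΩB p hp)).1 (abs_le.1 (hΩB p hp)).2
    field_simp
    linarith
  rw [integral_const_mul] at hlower
  have hchain := hlower.trans hhardy
  field_simp at hchain
  linarith

end HelmholtzIdentities

section ProfileRegions

/-- The region between the graphs of `-h` and `h` over `[a, b]`. -/
def profileRegion (a b : ℝ) (h : ℝ → ℝ) : Set (ℝ × ℝ) := {p | p.1 ∈ Icc a b ∧ |p.2| ≤ h p.1}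

/-- The derivative of `g` along the vector field `(A x, -c x * y)`. -/
def fieldDeriv (A c : ℝ → ℝ) (g : ℝ × ℝ → ℝ) (p : ℝ × ℝ) : ℝ :=
  A p.1 * pdx g p - c p.1 * p.2 * pdy g p

variable {a b : ℝ} {A A' c h h' : ℝ → ℝ} {D g : ℝ × ℝ → ℝ}

lemma isCompact_profileRegion (hh : Continuous h) : IsCompact (profileRegion a b h) := by
  obtain ⟨M, hM⟩ := (isCompact_Icc (a := a) (b := b)).exists_bound_of_continuousOn hh.continuousOn
  refine (isCompact_Icc.prod (isCompact_Icc (a := -M) (b := M))).of_isClosed_subset ?_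
    fun p hp => ⟨hp.1, abs_le.1 (hp.2.trans ((le_abs_self _).trans (hM p.1 hp.1)))⟩
  exact (isClosed_Icc.preimage continuous_fst).inter
    (isClosed_le continuous_snd.abs (hh.comp continuous_fst))

lemma setIntegral_profileRegion (hab : a ≤ b) (hh : Continuous h) (h0 : ∀ x ∈ Icc a b, 0 ≤ h x)
    (hD : IntegrableOn D (profileRegion a b h)) :
    ∫ p in profileRegion a b h, D p = ∫ x in a..b, ∫ t in (-1 : ℝ)..1, h x * D (x, h x * t) := by
  have hmeas : MeasurableSet (profileRegion a b h) := (isCompact_profileRegion hh).measurableSet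
  have hind : Integrable ((profileRegion a b h).indicator D) (volume.prod volume) :=
    (integrable_indicator_iff hmeas).2 hD
  rw [← integral_indicator hmeas, Measure.volume_eq_prod, integral_prod _ hind,
    intervalIntegral.integral_of_le hab, ← integral_Icc_eq_integral_Ioc,
    ← integral_indicator measurableSet_Icc]
  congr 1 with x
  by_cases hx : x ∈ Icc a b
  · have hslice : (fun y => (profileRegion a b h).indicator D (x, y)) =
        (Icc (-h x) (h x)).indicator fun y => D (x, y) := by
      have hmem : ∀ y, (x, y) ∈ profileRegion a b h ↔ y ∈ Icc (-h x) (h x) :=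
        fun y => (and_iff_right hx).trans abs_le
      ext y
      simp only [indicator, hmem]
    rw [indicator_of_mem hx, hslice, integral_indicator measurableSet_Icc,
      integral_Icc_eq_integral_Ioc, ← intervalIntegral.integral_of_le (by linarith [h0 x hx]),
      intervalIntegral.integral_const_mul,
      intervalIntegral.mul_integral_comp_mul_left (f := fun y => D (x, y)), mul_neg_one, mul_one]
  · rw [indicator_of_notMem hx]
    exact integral_eq_zero_of_ae (ae_of_all _ fun y => indicator_of_notMem (fun hp => hx hp.1) _)

lemma hasDerivAt_comp_graph {x t h'x : ℝ} (hg : DifferentiableAt ℝ g (x, h x * t))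
    (hderiv : HasDerivAt h h'x x) :
    HasDerivAt (fun s => g (s, h s * t))
      (pdx g (x, h x * t) + h'x * t * pdy g (x, h x * t)) x := by
  have hcurve := hasDerivAt_comp_curve hg (hasDerivAt_id x) (hderiv.mul_const t)
  rwa [id, fderiv_apply_eq_pdx_pdy hg, one_mul] at hcurve

lemma fieldDeriv_eq_zero_of_graph {x t h'x : ℝ} (hg : DifferentiableAt ℝ g (x, h x * t))
    (hderiv : HasDerivAt h h'x x) (htangent : A x * h'x = -c x * h x)
    (hzero : ∀ᶠ s in nhds x, g (s, h s * t) = 0) : fieldDeriv A c g (x, h x * t) = 0 := by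
  have hconst := (hasDerivAt_comp_graph hg hderiv).unique
    ((hasDerivAt_const x (0 : ℝ)).congr_of_eventuallyEq hzero)
  rw [fieldDeriv]
  linear_combination A x * hconst - t * pdy g (x, h x * t) * htangent

theorem tangential_divergence_mem_integralZero (hab : a ≤ b) (hh : Continuous h)
    (h0 : ∀ x ∈ Icc a b, 0 ≤ h x) (ha : h a = 0) (hb : h b = 0)
    (hderiv : ∀ x ∈ Ioo a b, HasDerivAt h (h' x) x)
    (htangent : ∀ x ∈ Ioo a b, A x * h' x = -c x * h x)
    (hA : ∀ x, HasDerivAt A (A' x) x) (hA' : Continuous A') (hc : Continuous c)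
    (hg : ContDiff ℝ 1 g) :
    (fun p => (A' p.1 - c p.1) * g p + fieldDeriv A c g p) ∈
      integralZero (volume.restrict (profileRegion a b h)) := by
  have hAc : Continuous A := continuous_iff_continuousAt.2 fun x => (hA x).continuousAt
  have hgc := hg.continuous
  have hgx := (contDiff_pdx hg (m := 0) (by norm_num)).continuous
  have hgy := (contDiff_pdy hg (m := 0) (by norm_num)).continuous
  set D : ℝ × ℝ → ℝ := fun p => (A' p.1 - c p.1) * g p + fieldDeriv A c g p with hDdef
  have hD : Continuous D := by unfold D fieldDeriv; fun_prop
  have hDint : IntegrableOn D (profileRegion a b h) :=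
    hD.continuousOn.integrableOn_compact (isCompact_profileRegion hh)
  refine ⟨hDint, ?_⟩
  -- In the coordinates `(x, t)` with `y = h x * t` the field is horizontal: `h x * D (x, h x * t)`
  -- is the derivative of `A x * h x * g (x, h x * t)` in `x`.
  rw [setIntegral_profileRegion hab hh h0 hDint, intervalIntegral_intervalIntegral_swap]
  · refine intervalIntegral.integral_zero_ae (ae_of_all _ fun t _ => ?_)
    rw [intervalIntegral.integral_eq_sub_of_hasDerivAt_of_le
      (f := fun x => A x * h x * g (x, h x * t)) hab (by fun_prop) (fun x hx => ?_)
      (Continuous.intervalIntegrable (by fun_prop) _ _)]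
    · rw [ha, hb]; ring
    · refine (((hA x).mul (hderiv x hx)).mul (hasDerivAt_comp_graph
        (hg.differentiable one_ne_zero _) (hderiv x hx))).congr_deriv ?_
      simp only [hDdef, fieldDeriv, Pi.mul_apply]
      linear_combination (g (x, h x * t) + h x * t * pdy g (x, h x * t)) * htangent x hx
  · have hcont : Continuous (Function.uncurry fun x t => h x * D (x, h x * t)) := by
      unfold Function.uncurry; fun_prop
    exact (hcont.continuousOn.integrableOn_compact (isCompact_uIcc.prod isCompact_uIcc)).mono_set
      (prod_mono uIoc_subset_uIcc uIoc_subset_uIcc)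

end ProfileRegions

section RellichIdentity

variable {Ω : Set (ℝ × ℝ)} {A A' c c' : ℝ → ℝ} {u : ℝ × ℝ → ℝ}

lemma contDiff_gradSq (hu : ContDiff ℝ 2 u) : ContDiff ℝ 1 (gradSq u) :=
  ((contDiff_pdx hu (by norm_num)).pow 2).add ((contDiff_pdy hu (by norm_num)).pow 2)

lemma fieldDeriv_sq (hu : Differentiable ℝ u) (p : ℝ × ℝ) :
    fieldDeriv A c (fun q => u q ^ 2) p = 2 * u p * fieldDeriv A c u p := by
  simp only [fieldDeriv, pow_two, pdx_mul (hu p) (hu p), pdy_mul (hu p) (hu p)]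
  ring

lemma fieldDeriv_gradSq (hu : ContDiff ℝ 2 u) (p : ℝ × ℝ) :
    fieldDeriv A c (gradSq u) p =
      2 * pdx u p * (A p.1 * pdx (pdx u) p - c p.1 * p.2 * pdx (pdy u) p) +
        2 * pdy u p * (A p.1 * pdx (pdy u) p - c p.1 * p.2 * pdy (pdy u) p) := by
  have hux := (contDiff_pdx hu (m := 1) (by norm_num)).differentiable one_ne_zero p
  have huy := (contDiff_pdy hu (m := 1) (by norm_num)).differentiable one_ne_zero p
  have hx : pdx (gradSq u) p = 2 * pdx u p * pdx (pdx u) p + 2 * pdy u p * pdx (pdy u) p := by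
    exact (((hasDerivAt_fst hux).pow 2).add ((hasDerivAt_fst huy).pow 2)).deriv.trans (by simp)
  have hy : pdy (gradSq u) p = 2 * pdx u p * pdx (pdy u) p + 2 * pdy u p * pdy (pdy u) p := by
    rw [← pdy_pdx_comm hu p]
    exact (((hasDerivAt_snd hux).pow 2).add ((hasDerivAt_snd huy).pow 2)).deriv.trans (by simp)
  rw [fieldDeriv, hx, hy]
  ring

lemma continuous_fieldDeriv (hA : Continuous A) (hc : Continuous c) (hu : ContDiff ℝ 1 u) :
    Continuous (fieldDeriv A c u) := by
  have hux := (contDiff_pdx hu (m := 0) (by norm_num)).continuous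
  have huy := (contDiff_pdy hu (m := 0) (by norm_num)).continuous
  unfold fieldDeriv
  fun_prop

lemma hasDerivAt_fieldDeriv_fst {A'x c'x : ℝ} {p : ℝ × ℝ} (hA : HasDerivAt A A'x p.1)
    (hc : HasDerivAt c c'x p.1) (hu : ContDiff ℝ 2 u) :
    HasDerivAt (fun t => fieldDeriv A c u (t, p.2))
      (A'x * pdx u p + A p.1 * pdx (pdx u) p -
        (c'x * p.2 * pdy u p + c p.1 * p.2 * pdx (pdy u) p)) p.1 := by
  have hux := (contDiff_pdx hu (m := 1) (by norm_num)).differentiable one_ne_zero p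
  have huy := (contDiff_pdy hu (m := 1) (by norm_num)).differentiable one_ne_zero p
  exact (hA.mul (hasDerivAt_fst hux)).sub ((hc.mul_const p.2).mul (hasDerivAt_fst huy))

lemma hasDerivAt_fieldDeriv_snd {p : ℝ × ℝ} (hu : ContDiff ℝ 2 u) :
    HasDerivAt (fun t => fieldDeriv A c u (p.1, t))
      (A p.1 * pdx (pdy u) p - (c p.1 * pdy u p + c p.1 * p.2 * pdy (pdy u) p)) p.2 := by
  have hux := (contDiff_pdx hu (m := 1) (by norm_num)).differentiable one_ne_zero p
  have huy := (contDiff_pdy hu (m := 1) (by norm_num)).differentiable one_ne_zero p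
  rw [← pdy_pdx_comm hu p]
  refine (((hasDerivAt_snd hux).const_mul (A p.1)).sub
    (((hasDerivAt_id p.2).const_mul (c p.1)).mul (hasDerivAt_snd huy))).congr_deriv ?_
  rw [mul_one, id]

lemma fieldDeriv_mul_pdx_mem_integralZero (hΩ : IsCompact Ω) (hconv : Convex ℝ Ω)
    (hA : ∀ x, HasDerivAt A (A' x) x) (hA' : Continuous A') (hc : HasPiecewiseDeriv c c')
    (hu : ContDiff ℝ 2 u) (htan : ∀ p ∈ frontier Ω, fieldDeriv A c u p = 0) :
    (fun p => -(c' p.1 * (p.2 * pdx u p * pdy u p)) + ((A' p.1 * pdx u p +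
      A p.1 * pdx (pdx u) p - c p.1 * p.2 * pdx (pdy u) p) * pdx u p +
        fieldDeriv A c u p * pdx (pdx u) p)) ∈ integralZero (volume.restrict Ω) := by
  have hux : ContDiff ℝ 1 (pdx u) := contDiff_pdx hu (by norm_num)
  have huy : ContDiff ℝ 1 (pdy u) := contDiff_pdy hu (by norm_num)
  have huxc := hux.continuous
  have huyc := huy.continuous
  have huxxc := (contDiff_pdx hux (m := 0) (by norm_num)).continuous
  have huyxc := (contDiff_pdx huy (m := 0) (by norm_num)).continuous
  have hAc : Continuous A := continuous_iff_continuousAt.2 fun x => (hA x).continuousAt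
  have hcc := hc.continuous
  have hfield := continuous_fieldDeriv hAc hcc (hu.of_le one_le_two)
  obtain ⟨s, hs, hcs⟩ := hc.hasDerivAt
  refine mem_integralZero_of_hasDerivAt_fst hΩ hconv hs (hfield.mul huxc)
    (fun p hp => mul_eq_zero_of_left (htan p hp) _) (fun p hp => ?_)
    ((hc.integrableOn_fst_mul hΩ (by fun_prop)).neg.add
      ((by fun_prop : Continuous _).continuousOn.integrableOn_compact hΩ))
  refine ((hasDerivAt_fieldDeriv_fst (hA p.1) (hcs p.1 hp) hu).mul
    (hasDerivAt_fst (hux.differentiable one_ne_zero p))).congr_deriv ?_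
  ring

lemma fieldDeriv_mul_pdy_mem_integralZero (hΩ : IsCompact Ω) (hconv : Convex ℝ Ω)
    (hA : Continuous A) (hc : Continuous c)
    (hu : ContDiff ℝ 2 u) (htan : ∀ p ∈ frontier Ω, fieldDeriv A c u p = 0) :
    (fun p => (A p.1 * pdx (pdy u) p - (c p.1 * pdy u p + c p.1 * p.2 * pdy (pdy u) p)) * pdy u p +
      fieldDeriv A c u p * pdy (pdy u) p) ∈ integralZero (volume.restrict Ω) := by
  have huy : ContDiff ℝ 1 (pdy u) := contDiff_pdy hu (by norm_num)
  have huyc := huy.continuous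
  have huyxc := (contDiff_pdx huy (m := 0) (by norm_num)).continuous
  have huyyc := (contDiff_pdy huy (m := 0) (by norm_num)).continuous
  have hfield := continuous_fieldDeriv hA hc (hu.of_le one_le_two)
  exact mem_integralZero_of_hasDerivAt_snd hΩ hconv countable_empty (hfield.mul huyc)
    (fun p hp => mul_eq_zero_of_left (htan p hp) _)
    (fun p _ => (hasDerivAt_fieldDeriv_snd hu).mul
      (hasDerivAt_snd (huy.differentiable one_ne_zero p)))
    ((by fun_prop : Continuous _).continuousOn.integrableOn_compact hΩ)

lemma fieldDeriv_mul_lap_mem_integralZero (hΩ : IsCompact Ω) (hconv : Convex ℝ Ω)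
    (hA : ∀ x, HasDerivAt A (A' x) x) (hA' : Continuous A') (hc : HasPiecewiseDeriv c c')
    (hu : ContDiff ℝ 2 u) (htan : ∀ p ∈ frontier Ω, fieldDeriv A c u p = 0) :
    (fun p => A' p.1 * pdx u p ^ 2 - c' p.1 * (p.2 * pdx u p * pdy u p) - c p.1 * pdy u p ^ 2 +
      fieldDeriv A c (gradSq u) p / 2 - fieldDeriv A c u p * lap u p) ∈
        integralZero (volume.restrict Ω) := by
  have hAc : Continuous A := continuous_iff_continuousAt.2 fun x => (hA x).continuousAt
  convert add_mem (fieldDeriv_mul_pdx_mem_integralZero hΩ hconv hA hA' hc hu htan)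
    (fieldDeriv_mul_pdy_mem_integralZero hΩ hconv hAc hc.continuous hu htan) using 1
  funext p
  rw [Pi.add_apply, fieldDeriv_gradSq hu, lap]
  ring

theorem rellich_identity (hΩ : IsCompact Ω) (hconv : Convex ℝ Ω)
    (hA : ∀ x, HasDerivAt A (A' x) x) (hA' : Continuous A') (hc : HasPiecewiseDeriv c c')
    (hdiv : ∀ g : ℝ × ℝ → ℝ, ContDiff ℝ 1 g →
      (fun p => (A' p.1 - c p.1) * g p + fieldDeriv A c g p) ∈ integralZero (volume.restrict Ω))
    (hu : ContDiff ℝ 2 u) (h0 : ∀ p ∈ frontier Ω, u p = 0)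
    (htan : ∀ p ∈ frontier Ω, fieldDeriv A c u p = 0) (l : ℝ) :
    (fun p => A' p.1 * pdx u p ^ 2 - c' p.1 * (p.2 * pdx u p * pdy u p) - c p.1 * pdy u p ^ 2 -
      (A' p.1 - c p.1 - 1) / 2 * (gradSq u p - l ^ 2 * u p ^ 2) -
        helmholtz l u p * (fieldDeriv A c u p + u p / 2)) ∈ integralZero (volume.restrict Ω) := by
  have hu1 : ContDiff ℝ 1 u := hu.of_le one_le_two
  have hfield := fieldDeriv_mul_lap_mem_integralZero hΩ hconv hA hA' hc hu htan
  have hgrad := Submodule.smul_mem _ (-1 / 2 : ℝ) (hdiv _ (contDiff_gradSq hu))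
  have hmass := Submodule.smul_mem _ (l ^ 2 / 2) (hdiv _ (hu1.pow 2))
  have henergy := Submodule.smul_mem _ (1 / 2 : ℝ) (energy_identity hΩ hconv
    (.of_hasDerivAt (fun x => hasDerivAt_const x (1 : ℝ)) continuous_const) hu h0)
  convert add_mem (add_mem hfield hgrad) (add_mem hmass henergy) using 1
  funext p
  simp only [Pi.add_apply, Pi.smul_apply, smul_eq_mul,
    fieldDeriv_sq (hu1.differentiable one_ne_zero), helmholtz]
  ring

end RellichIdentity

section Stadium

/-- The nearest point projection of `ℝ` onto `[-α, α]`. -/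
def clamp (α x : ℝ) : ℝ := max (-α) (min x α)

/-- The horizontal displacement of a point with abscissa `x` from the rectangle; its absolute value
is `w` on the wings. -/
def wingCoord (α x : ℝ) : ℝ := x - clamp α x

/-- The indicator function of the wings, as a function of the abscissa. -/
def wingInd (α : ℝ) : ℝ → ℝ := {x | α ≤ |x|}.indicator fun _ => 1

/-- The half-height of the stadium above the abscissa `x`. -/
def stadiumHeight (α β x : ℝ) : ℝ := √(β ^ 2 - wingCoord α x ^ 2)

variable {α β : ℝ} {p : ℝ × ℝ}

lemma clamp_wingInd_cases (hα : 0 ≤ α) (x : ℝ) :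
    (α ≤ x ∧ clamp α x = α ∧ wingInd α x = 1) ∨ (x ≤ -α ∧ clamp α x = -α ∧ wingInd α x = 1) ∨
      (|x| < α ∧ clamp α x = x ∧ wingInd α x = 0) := by
  rcases le_or_gt α |x| with hx | hx
  · have hind : wingInd α x = 1 := indicator_of_mem (s := {x | α ≤ |x|}) hx _
    rcases le_abs'.1 hx with hx | hx
    · exact .inr (.inl ⟨hx, by rw [clamp, min_eq_left (by linarith), max_eq_left hx], hind⟩)
    · exact .inl ⟨hx, by rw [clamp, min_eq_right hx, max_eq_right (by linarith)], hind⟩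
  · have hx' := abs_lt.1 hx
    exact .inr (.inr ⟨hx, by rw [clamp, min_eq_left hx'.2.le, max_eq_right hx'.1.le],
      indicator_of_notMem (s := {x | α ≤ |x|}) hx.not_ge _⟩)

lemma wingCoord_mul_wingInd (hα : 0 ≤ α) (x : ℝ) :
    wingCoord α x * wingInd α x = wingCoord α x := by
  rcases clamp_wingInd_cases hα x with ⟨-, hc, hi⟩ | ⟨-, hc, hi⟩ | ⟨-, hc, hi⟩ <;>
    simp [wingCoord, hc, hi]

lemma continuous_clamp : Continuous (clamp α) := by unfold clamp; fun_prop

lemma continuous_wingCoord : Continuous (wingCoord α) := continuous_id.sub continuous_clamp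

lemma hasPiecewiseDeriv_clamp (hα : 0 ≤ α) :
    HasPiecewiseDeriv (clamp α) fun x => 1 - wingInd α x := by
  refine ⟨continuous_clamp, ⟨{α, -α}, (countable_singleton _).insert _, fun x hx => ?_⟩,
    (locallyIntegrable_const 1).sub ((locallyIntegrable_const 1).indicator
      (measurableSet_le measurable_const continuous_abs.measurable))⟩
  rw [mem_insert_iff, mem_singleton_iff, not_or] at hx
  rcases clamp_wingInd_cases hα x with ⟨h, -, hi⟩ | ⟨h, -, hi⟩ | ⟨h, -, hi⟩ <;> rw [hi]
  · refine ((hasDerivAt_const x α).congr_of_eventuallyEq ?_).congr_deriv (sub_self 1).symm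
    filter_upwards [Ioi_mem_nhds (lt_of_le_of_ne h (Ne.symm hx.1))] with s hs
    rw [clamp, min_eq_right hs.le, max_eq_right (by linarith)]
  · refine ((hasDerivAt_const x (-α)).congr_of_eventuallyEq ?_).congr_deriv (sub_self 1).symm
    filter_upwards [Iio_mem_nhds (lt_of_le_of_ne h hx.2)] with s hs
    rw [clamp, max_eq_left ((min_le_left s α).trans hs.le)]
  · refine ((hasDerivAt_id x).congr_of_eventuallyEq ?_).congr_deriv (sub_zero 1).symm
    filter_upwards [Ioo_mem_nhds (abs_lt.1 h).1 (abs_lt.1 h).2] with s hs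
    rw [clamp, min_eq_left hs.2.le, max_eq_right hs.1.le, id]

lemma hasPiecewiseDeriv_wingCoord (hα : 0 ≤ α) :
    HasPiecewiseDeriv (wingCoord α) (wingInd α) := by
  have hid : HasPiecewiseDeriv (fun x => x) (fun _ => 1) :=
    .of_hasDerivAt hasDerivAt_id continuous_const
  convert hid.add ((hasPiecewiseDeriv_clamp hα).const_mul (-1)) using 1 <;> ext x
  · rw [wingCoord]; ring
  · ring

lemma hasDerivAt_wingCoord_sq (hα : 0 ≤ α) (x : ℝ) :
    HasDerivAt (fun x => wingCoord α x ^ 2) (2 * wingCoord α x) x := by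
  have hsq := (hasPiecewiseDeriv_wingCoord hα).mul (hasPiecewiseDeriv_wingCoord hα)
  simp only [mul_comm (wingInd α _), wingCoord_mul_wingInd hα, ← two_mul, ← sq] at hsq
  exact hsq.hasDerivAt_of_continuous (continuous_const.mul continuous_wingCoord) x

lemma abs_wingCoord_le_iff (hα : 0 ≤ α) {r : ℝ} (hr : 0 ≤ r) (x : ℝ) :
    |wingCoord α x| ≤ r ↔ |x| ≤ α + r := by
  rw [wingCoord, abs_le, abs_le]
  rcases clamp_wingInd_cases hα x with ⟨hx, hc, -⟩ | ⟨hx, hc, -⟩ | ⟨hx, hc, -⟩ <;> rw [hc]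
  · constructor <;> rintro ⟨-, h⟩ <;> constructor <;> linarith
  · constructor <;> rintro ⟨h, -⟩ <;> constructor <;> linarith
  · rw [abs_lt] at hx
    constructor <;> rintro - <;> constructor <;> linarith

lemma abs_wingCoord (hα : 0 ≤ α) (x : ℝ) : |wingCoord α x| = max (|x| - α) 0 := by
  refine eq_of_forall_ge_iff fun r => ?_
  rw [max_le_iff, sub_le_iff_le_add']
  exact ⟨fun h => have hr := (abs_nonneg _).trans h; ⟨(abs_wingCoord_le_iff hα hr x).1 h, hr⟩,
    fun h => (abs_wingCoord_le_iff hα h.2 x).2 h.1⟩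

lemma stadium_eq (hα : 0 ≤ α) (hβ : 0 ≤ β) :
    Stadium α β = {p | wingCoord α p.1 ^ 2 + p.2 ^ 2 ≤ β ^ 2} := by
  ext ⟨x, y⟩
  simp only [Stadium, Rect, Wings, wingCoord, mem_union, mem_prod, mem_Icc, mem_ofPred_eq]
  rcases clamp_wingInd_cases hα x with ⟨hx, hc, -⟩ | ⟨hx, hc, -⟩ | ⟨hx, hc, -⟩ <;> rw [hc]
  · refine ⟨?_, fun h => .inr (.inl ⟨h, hx⟩)⟩
    rintro (⟨⟨-, hxα⟩, hy⟩ | h | h)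
    · rw [le_antisymm hxα hx, sub_self]
      simpa using sq_le_sq' hy.1 hy.2
    · exact h.1
    · nlinarith [h.1, h.2]
  · refine ⟨?_, fun h => .inr (.inr ⟨by linarith, hx⟩)⟩
    rintro (⟨⟨hxα, -⟩, hy⟩ | h | h)
    · rw [le_antisymm hx hxα, sub_self]
      simpa using sq_le_sq' hy.1 hy.2
    · nlinarith [h.1, h.2]
    · linarith [h.1]
  · have hx' := abs_lt.1 hx
    have hy : (x - x) ^ 2 + y ^ 2 ≤ β ^ 2 ↔ -β ≤ y ∧ y ≤ β := by
      rw [sub_self, zero_pow two_ne_zero, zero_add, sq_le_sq, abs_of_nonneg hβ, abs_le]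
    rw [hy]
    refine ⟨?_, fun h => .inl ⟨⟨hx'.1.le, hx'.2.le⟩, h⟩⟩
    rintro (h | h | h)
    · exact h.2
    · linarith [h.2]
    · linarith [h.2]

lemma wings_eq (hα : 0 ≤ α) (hβ : 0 ≤ β) :
    Wings α β = Stadium α β ∩ {p | α ≤ |p.1|} := by
  ext ⟨x, y⟩
  refine ⟨fun h => ⟨.inr h, h.elim (fun h => h.2.trans (le_abs_self x))
    fun h => le_abs.2 (.inr (le_neg_of_le_neg h.2))⟩, fun ⟨hS, hx⟩ => ?_⟩
  rw [stadium_eq hα hβ, mem_ofPred_eq, wingCoord] at hS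
  rcases clamp_wingInd_cases hα x with ⟨h, hc, -⟩ | ⟨h, hc, -⟩ | ⟨h, -⟩
  · exact .inl ⟨hc ▸ hS, h⟩
  · exact .inr ⟨by simpa [hc] using hS, h⟩
  · exact absurd hx h.not_ge

lemma setIntegral_wings (hα : 0 ≤ α) (hβ : 0 ≤ β) (F : ℝ × ℝ → ℝ) :
    ∫ p in Wings α β, F p = ∫ p in Stadium α β, wingInd α p.1 * F p := by
  have hmeas : MeasurableSet {p : ℝ × ℝ | α ≤ |p.1|} :=
    measurableSet_le measurable_const continuous_fst.abs.measurable
  rw [wings_eq hα hβ, ← setIntegral_indicator hmeas]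
  congr 1 with p
  by_cases hp : α ≤ |p.1| <;> simp [wingInd, hp]

lemma continuous_stadiumHeight : Continuous (stadiumHeight α β) :=
  (continuous_const.sub (continuous_wingCoord.pow 2)).sqrt

lemma stadium_eq_profileRegion (hα : 0 ≤ α) (hβ : 0 ≤ β) :
    Stadium α β = profileRegion (-(α + β)) (α + β) (stadiumHeight α β) := by
  rw [stadium_eq hα hβ]
  ext ⟨x, y⟩
  rw [profileRegion, mem_ofPred_eq, mem_ofPred_eq, mem_Icc, ← abs_le, ← abs_wingCoord_le_iff hα hβ,
    ← abs_of_nonneg hβ, ← sq_le_sq, abs_of_nonneg hβ, stadiumHeight]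
  refine ⟨fun h => ⟨by nlinarith [sq_nonneg y], abs_le_sqrt (by linarith)⟩, fun ⟨hx, hy⟩ => ?_⟩
  rw [le_sqrt (abs_nonneg y) (sub_nonneg.2 hx), sq_abs] at hy
  linarith

lemma isCompact_stadium (hα : 0 ≤ α) (hβ : 0 ≤ β) : IsCompact (Stadium α β) := by
  rw [stadium_eq_profileRegion hα hβ]
  exact isCompact_profileRegion continuous_stadiumHeight

lemma convex_stadium (hα : 0 ≤ α) (hβ : 0 ≤ β) : Convex ℝ (Stadium α β) := by
  have habs : ConvexOn ℝ univ fun p : ℝ × ℝ => |wingCoord α p.1| := by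
    simp only [abs_wingCoord hα]
    exact (((convexOn_norm convex_univ).sub (concaveOn_const α convex_univ)).sup
      (convexOn_const 0 convex_univ)).comp_linearMap (LinearMap.fst ℝ ℝ ℝ)
  have hsq : ConvexOn ℝ univ fun p : ℝ × ℝ => |wingCoord α p.1| ^ 2 + p.2 ^ 2 :=
    (habs.pow (fun _ _ => abs_nonneg _) 2).add
      ((even_two.convexOn_pow (𝕜 := ℝ)).comp_linearMap (LinearMap.snd ℝ ℝ ℝ))
  simpa only [stadium_eq hα hβ, mem_univ, true_and, sq_abs] using hsq.convex_le (β ^ 2)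

lemma frontier_stadium_subset (hα : 0 ≤ α) (hβ : 0 ≤ β) :
    frontier (Stadium α β) ⊆ {p | wingCoord α p.1 ^ 2 + p.2 ^ 2 = β ^ 2} := by
  rw [stadium_eq hα hβ]
  exact frontier_le_subset_eq
    (((continuous_wingCoord.comp continuous_fst).pow 2).add (continuous_snd.pow 2)) continuous_const

lemma mem_stadiumBoundary (hα : 0 ≤ α) (hp : wingCoord α p.1 ^ 2 + p.2 ^ 2 = β ^ 2) :
    p ∈ StadiumBoundary α β := by
  rw [← sq_abs (wingCoord _ _), abs_wingCoord hα] at hp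
  rcases le_total α |p.1| with hx | hx
  · exact .inr ⟨by rwa [max_eq_left (sub_nonneg.2 hx)] at hp, hx⟩
  · rw [max_eq_right (sub_nonpos.2 hx)] at hp
    exact .inl ⟨hx, sq_eq_sq_iff_eq_or_eq_neg.1 (by linarith)⟩

end Stadium

section TangentField

/-- The horizontal component `A` of the vector field `(A x, -c x * y)`, which is tangent to the
boundary of the stadium and equals `(x, 0)` on the rectangle. -/
def fieldStretch (α β x : ℝ) : ℝ := x * (1 - wingCoord α x ^ 2 / β ^ 2)

/-- The coefficient `c` of the vertical component of the vector field `(A x, -c x * y)`. -/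
def fieldShear (α β x : ℝ) : ℝ := x * wingCoord α x / β ^ 2

variable {α β : ℝ} {p : ℝ × ℝ} {u : ℝ × ℝ → ℝ}

lemma hasDerivAt_fieldStretch (hα : 0 ≤ α) (x : ℝ) :
    HasDerivAt (fieldStretch α β) (1 - wingCoord α x ^ 2 / β ^ 2 - 2 * fieldShear α β x) x := by
  refine ((hasDerivAt_id x).mul
    (((hasDerivAt_wingCoord_sq hα x).div_const (β ^ 2)).const_sub 1)).congr_deriv ?_
  rw [id, fieldShear]
  ring

lemma hasPiecewiseDeriv_fieldShear (hα : 0 ≤ α) :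
    HasPiecewiseDeriv (fieldShear α β)
      fun x => (wingCoord α x + x * wingInd α x) / β ^ 2 := by
  have hid : HasPiecewiseDeriv (fun x => x) (fun _ => 1) :=
    .of_hasDerivAt hasDerivAt_id continuous_const
  convert (hid.mul (hasPiecewiseDeriv_wingCoord hα)).const_mul (β ^ 2)⁻¹ using 1 <;> ext x
  · exact div_eq_inv_mul _ _
  · rw [div_eq_inv_mul, one_mul]

lemma hasDerivAt_stadiumHeight (hα : 0 ≤ α) {x : ℝ} (hx : |wingCoord α x| < β) :
    HasDerivAt (stadiumHeight α β) (-wingCoord α x / stadiumHeight α β x) x := by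
  have hpos : 0 < β ^ 2 - wingCoord α x ^ 2 :=
    sub_pos.2 (sq_lt_sq' (abs_lt.1 hx).1 (abs_lt.1 hx).2)
  refine (((hasDerivAt_wingCoord_sq hα x).const_sub _).sqrt hpos.ne').congr_deriv ?_
  rw [← mul_neg, mul_div_mul_left _ _ two_ne_zero, stadiumHeight]

lemma fieldStretch_mul_stadiumHeight_deriv {x : ℝ} (hx : |wingCoord α x| < β) :
    fieldStretch α β x * (-wingCoord α x / stadiumHeight α β x) =
      -fieldShear α β x * stadiumHeight α β x := by
  have hβ : 0 < β := (abs_nonneg _).trans_lt hx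
  have hpos : 0 < β ^ 2 - wingCoord α x ^ 2 :=
    sub_pos.2 (sq_lt_sq' (abs_lt.1 hx).1 (abs_lt.1 hx).2)
  have hsq : stadiumHeight α β x ^ 2 = β ^ 2 - wingCoord α x ^ 2 := sq_sqrt hpos.le
  have hh : stadiumHeight α β x ≠ 0 := (sqrt_pos.2 hpos).ne'
  rw [fieldStretch, fieldShear]
  field_simp
  rw [hsq]

lemma abs_wingCoord_lt (hα : 0 ≤ α) (hβ : 0 < β) {x : ℝ} (hx : x ∈ Ioo (-(α + β)) (α + β)) :
    |wingCoord α x| < β := by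
  rw [abs_wingCoord hα]
  exact max_lt (by linarith [abs_lt.2 hx]) hβ

lemma stadium_divergence_mem_integralZero (hα : 0 ≤ α) (hβ : 0 < β) {g : ℝ × ℝ → ℝ}
    (hg : ContDiff ℝ 1 g) :
    (fun p => (1 - wingCoord α p.1 ^ 2 / β ^ 2 - 2 * fieldShear α β p.1 -
      fieldShear α β p.1) * g p + fieldDeriv (fieldStretch α β) (fieldShear α β) g p) ∈
        integralZero (volume.restrict (Stadium α β)) := by
  have hc : Continuous (fieldShear α β) := (hasPiecewiseDeriv_fieldShear hα).continuous
  have hend : ∀ x, |x| = α + β → stadiumHeight α β x = 0 := fun x hx => by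
    rw [stadiumHeight, ← sq_abs (wingCoord α x), abs_wingCoord hα, hx, add_sub_cancel_left,
      max_eq_left hβ.le, sub_self, sqrt_zero]
  have hsum : |α + β| = α + β := abs_of_nonneg (by positivity)
  rw [stadium_eq_profileRegion hα hβ.le]
  exact tangential_divergence_mem_integralZero (by linarith) continuous_stadiumHeight
    (fun x _ => sqrt_nonneg _) (hend _ (by rw [abs_neg, hsum])) (hend _ hsum)
    (fun x hx => hasDerivAt_stadiumHeight hα (abs_wingCoord_lt hα hβ hx))
    (fun x hx => fieldStretch_mul_stadiumHeight_deriv (abs_wingCoord_lt hα hβ hx))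
    (hasDerivAt_fieldStretch hα)
    ((continuous_const.sub ((continuous_wingCoord.pow 2).div_const _)).sub (hc.const_mul 2)) hc hg

lemma fieldDeriv_eq_zero_of_mem_frontier (hα : 0 ≤ α) (hβ : 0 < β) (hu : Differentiable ℝ u)
    (h0 : ∀ p ∈ StadiumBoundary α β, u p = 0) (hp : p ∈ frontier (Stadium α β)) :
    fieldDeriv (fieldStretch α β) (fieldShear α β) u p = 0 := by
  obtain ⟨x, y⟩ := p
  have hxy : wingCoord α x ^ 2 + y ^ 2 = β ^ 2 := frontier_stadium_subset hα hβ.le hp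
  rcases eq_or_ne y 0 with rfl | hy
  · have hm : wingCoord α x ^ 2 = β ^ 2 := by linarith
    rw [fieldDeriv, fieldStretch, hm, div_self (by positivity)]
    ring
  have hx : |wingCoord α x| < β := abs_lt_of_sq_lt_sq (by linarith [sq_pos_of_ne_zero hy]) hβ.le
  have hheight : stadiumHeight α β x = |y| := by
    rw [stadiumHeight, ← hxy, add_sub_cancel_left, sqrt_sq_eq_abs]
  obtain ⟨σ, hσ, hyσ⟩ : ∃ σ : ℝ, σ ^ 2 = 1 ∧ y = stadiumHeight α β x * σ :=
    ⟨SignType.sign y, by rcases lt_or_gt_of_ne hy with h | h <;> simp [h],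
      by rw [hheight, abs_mul_sign]⟩
  rw [hyσ]
  refine fieldDeriv_eq_zero_of_graph (hu _) (hasDerivAt_stadiumHeight hα hx)
    (fieldStretch_mul_stadiumHeight_deriv hx) ?_
  filter_upwards [continuous_wingCoord.abs.continuousAt.eventually_lt continuousAt_const hx]
    with s hs
  refine h0 _ (mem_stadiumBoundary hα ?_)
  rw [mul_pow, hσ, mul_one, stadiumHeight, sq_sqrt (sub_nonneg.2 (sq_le_sq' (abs_lt.1 hs).1.le
    (abs_lt.1 hs).2.le)), add_sub_cancel]

end TangentField

section RellichEstimate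

variable {α β : ℝ} {p : ℝ × ℝ} {u : ℝ × ℝ → ℝ}

lemma wingInd_eq_zero_or_one (α x : ℝ) : wingInd α x = 0 ∨ wingInd α x = 1 :=
  indicator_eq_zero_or_self {x | α ≤ |x|} (fun _ => (1 : ℝ)) x

lemma abs_fst_le_of_mem_stadium (hα : 0 ≤ α) (hβ : 0 ≤ β) (hp : p ∈ Stadium α β) :
    |p.1| ≤ α + β := by
  rw [stadium_eq_profileRegion hα hβ] at hp
  exact abs_le.2 hp.1

lemma abs_snd_le_of_mem_stadium (hα : 0 ≤ α) (hβ : 0 ≤ β) (hp : p ∈ Stadium α β) :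
    |p.2| ≤ β := by
  rw [stadium_eq hα hβ, mem_ofPred_eq] at hp
  exact abs_le_of_sq_le_sq (by linarith [sq_nonneg (wingCoord α p.1)]) hβ

lemma abs_wingCoord_le_of_mem_stadium (hα : 0 ≤ α) (hβ : 0 ≤ β) (hp : p ∈ Stadium α β) :
    |wingCoord α p.1| ≤ β :=
  (abs_wingCoord_le_iff hα hβ _).2 (abs_fst_le_of_mem_stadium hα hβ hp)

lemma mul_wingCoord_nonneg (hα : 0 ≤ α) (x : ℝ) : 0 ≤ x * wingCoord α x := by
  rw [wingCoord]
  rcases clamp_wingInd_cases hα x with ⟨hx, hc, -⟩ | ⟨hx, hc, -⟩ | ⟨-, hc, -⟩ <;> rw [hc]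
  · exact mul_nonneg (hα.trans hx) (sub_nonneg.2 hx)
  · exact mul_nonneg_of_nonpos_of_nonpos (by linarith) (by linarith)
  · rw [sub_self, mul_zero]

lemma abs_wingCoord_le_mul_wingInd (hα : 0 ≤ α) (hβ : 0 ≤ β) (hp : p ∈ Stadium α β) :
    |wingCoord α p.1| ≤ β * wingInd α p.1 := by
  rcases wingInd_eq_zero_or_one α p.1 with h | h
  · rw [← wingCoord_mul_wingInd hα, h, mul_zero, mul_zero, abs_zero]
  · rw [h, mul_one]
    exact abs_wingCoord_le_of_mem_stadium hα hβ hp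

lemma wingCoord_sq_div_le (hα : 0 ≤ α) (hβ : 0 < β) (hp : p ∈ Stadium α β) :
    wingCoord α p.1 ^ 2 / β ^ 2 ≤ wingInd α p.1 := by
  have hsq := pow_le_pow_left₀ (abs_nonneg _) (abs_wingCoord_le_mul_wingInd hα hβ.le hp) 2
  rw [sq_abs, mul_pow, mul_comm] at hsq
  rw [div_le_iff₀ (by positivity)]
  rcases wingInd_eq_zero_or_one α p.1 with h | h <;> rw [h] at hsq ⊢ <;> simpa using hsq

lemma fieldShear_nonneg (hα : 0 ≤ α) (x : ℝ) : 0 ≤ fieldShear α β x :=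
  div_nonneg (mul_wingCoord_nonneg hα x) (sq_nonneg β)

lemma fieldShear_mul_le (hα : 0 ≤ α) (hβ : 0 < β) (hp : p ∈ Stadium α β) :
    fieldShear α β p.1 * β ≤ (α + β) * wingInd α p.1 := by
  rw [fieldShear, div_mul_eq_mul_div, div_le_iff₀ (by positivity)]
  calc p.1 * wingCoord α p.1 * β ≤ |p.1| * |wingCoord α p.1| * β := by
        rw [← abs_mul]; gcongr; exact le_abs_self _
    _ ≤ (α + β) * (β * wingInd α p.1) * β := by
        gcongr
        · exact abs_fst_le_of_mem_stadium hα hβ.le hp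
        · exact abs_wingCoord_le_mul_wingInd hα hβ.le hp
    _ = (α + β) * wingInd α p.1 * β ^ 2 := by ring

lemma abs_fieldStretch_le (hα : 0 ≤ α) (hβ : 0 < β) (hp : p ∈ Stadium α β) :
    |fieldStretch α β p.1| ≤ α + β := by
  have hle : wingCoord α p.1 ^ 2 / β ^ 2 ≤ 1 := (wingCoord_sq_div_le hα hβ hp).trans
    (by rcases wingInd_eq_zero_or_one α p.1 with h | h <;> simp [h])
  have hnonneg : 0 ≤ wingCoord α p.1 ^ 2 / β ^ 2 := by positivity
  rw [fieldStretch, abs_mul, abs_of_nonneg (sub_nonneg.2 hle)]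
  exact (mul_le_of_le_one_right (abs_nonneg _) (by linarith)).trans
    (abs_fst_le_of_mem_stadium hα hβ.le hp)

lemma abs_fieldShear_deriv_mul_le (hα : 0 ≤ α) (hβ : 0 < β) (hp : p ∈ Stadium α β) :
    |(wingCoord α p.1 + p.1 * wingInd α p.1) / β ^ 2 * p.2| ≤
      ((α + β) / β + 1) * wingInd α p.1 := by
  have hi : 0 ≤ wingInd α p.1 := by rcases wingInd_eq_zero_or_one α p.1 with h | h <;> simp [h]
  rw [abs_mul, abs_div, abs_of_pos (by positivity : 0 < β ^ 2)]
  calc |wingCoord α p.1 + p.1 * wingInd α p.1| / β ^ 2 * |p.2|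
      ≤ (β * wingInd α p.1 + (α + β) * wingInd α p.1) / β ^ 2 * β := by
        gcongr
        · refine (abs_add_le _ _).trans (add_le_add (abs_wingCoord_le_mul_wingInd hα hβ.le hp) ?_)
          rw [abs_mul, abs_of_nonneg hi]
          gcongr
          exact abs_fst_le_of_mem_stadium hα hβ.le hp
        · exact abs_snd_le_of_mem_stadium hα hβ.le hp
    _ = ((α + β) / β + 1) * wingInd α p.1 := by field_simp; ring

lemma mul_mul_le_of_abs_le {a B h x : ℝ} (ha : |a| ≤ B) :
    h * a * x ≤ B ^ 2 * h ^ 2 + x ^ 2 / 4 := by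
  have ha := sq_le_sq' (abs_le.1 ha).1 (abs_le.1 ha).2
  nlinarith [sq_nonneg (h * a - x / 2), mul_le_mul_of_nonneg_left ha (sq_nonneg h)]

lemma rellich_integrand_le {B D χ μ c k s a l h u x y : ℝ} (hB : 0 < B) (hD : 1 ≤ D)
    (hχ : χ = 0 ∨ χ = 1) (hμ : 0 ≤ μ) (hμχ : μ ≤ χ) (hc : 0 ≤ c) (hcχ : c ≤ D * χ)
    (hk : |k| ≤ D * χ) (hs : |s| ≤ B * χ) (ha : |a| ≤ B) :
    3 / 4 * x ^ 2 - u ^ 2 / (16 * B ^ 2) ≤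
      3 * B ^ 2 * h ^ 2 + 2 * D * (χ * (x ^ 2 + y ^ 2) + l ^ 2 * (χ * u ^ 2)) +
        ((1 - μ - 2 * c) * x ^ 2 - k * x * y - c * y ^ 2 -
          ((1 - μ - 2 * c) - c - 1) / 2 * (x ^ 2 + y ^ 2 - l ^ 2 * u ^ 2) -
            h * (a * x - s * y + u / 2)) := by
  have hχD : χ ≤ D * χ := le_mul_of_one_le_left (hμ.trans hμχ) hD
  have hax : h * a * x ≤ B ^ 2 * h ^ 2 + x ^ 2 / 4 := mul_mul_le_of_abs_le ha
  have hsy : -h * s * y ≤ B ^ 2 * h ^ 2 + χ * y ^ 2 / 4 := by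
    rcases hχ with rfl | rfl
    · rw [mul_zero, abs_nonpos_iff] at hs
      rw [hs, mul_zero, zero_mul, zero_mul, zero_div, add_zero]
      positivity
    · rw [mul_one] at hs
      simpa only [neg_sq, one_mul] using mul_mul_le_of_abs_le (h := -h) (x := y) hs
  have hu : h * u / 2 ≤ B ^ 2 * h ^ 2 + u ^ 2 / (16 * B ^ 2) :=
    calc h * u / 2 = h * B * (u / (2 * B)) := by field_simp
      _ ≤ B ^ 2 * h ^ 2 + (u / (2 * B)) ^ 2 / 4 := mul_mul_le_of_abs_le (abs_of_pos hB).le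
      _ = B ^ 2 * h ^ 2 + u ^ 2 / (16 * B ^ 2) := by ring
  have hxy : |x * y| ≤ (x ^ 2 + y ^ 2) / 2 :=
    abs_le.2 ⟨by linarith [sq_nonneg (x + y)], by linarith [sq_nonneg (x - y)]⟩
  have hkxy : k * (x * y) ≤ D * χ * ((x ^ 2 + y ^ 2) / 2) :=
    calc k * (x * y) ≤ |k| * |x * y| := (le_abs_self _).trans (abs_mul _ _).le
      _ ≤ D * χ * ((x ^ 2 + y ^ 2) / 2) :=
        mul_le_mul hk hxy (abs_nonneg _) ((abs_nonneg k).trans hk)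
  have hx := mul_nonneg (by linarith : 0 ≤ 3 / 2 * (D * χ) - (μ + c) / 2) (sq_nonneg x)
  have hy := mul_nonneg (by linarith : 0 ≤ (μ + c) / 2 + 3 / 2 * (D * χ) - χ / 4) (sq_nonneg y)
  have hlu := mul_nonneg (by linarith : 0 ≤ 2 * (D * χ) - (μ + 3 * c) / 2) (sq_nonneg (l * u))
  linarith

lemma eq_zero_of_mem_frontier_stadium (hα : 0 ≤ α) (hβ : 0 ≤ β)
    (h0 : ∀ p ∈ StadiumBoundary α β, u p = 0) : ∀ p ∈ frontier (Stadium α β), u p = 0 :=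
  fun p hp => h0 p (mem_stadiumBoundary hα (frontier_stadium_subset hα hβ hp))

lemma integrableOn_stadium (hα : 0 ≤ α) (hβ : 0 ≤ β) {F : ℝ × ℝ → ℝ} (hF : Continuous F) :
    IntegrableOn F (Stadium α β) :=
  hF.continuousOn.integrableOn_compact (isCompact_stadium hα hβ)

lemma integrableOn_stadium_wingInd_mul (hα : 0 ≤ α) (hβ : 0 ≤ β) {F : ℝ × ℝ → ℝ}
    (hF : Continuous F) : IntegrableOn (fun p => wingInd α p.1 * F p) (Stadium α β) :=
  (hasPiecewiseDeriv_wingCoord hα).integrableOn_fst_mul (isCompact_stadium hα hβ) hF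

lemma stadium_rellich_estimate (hα : 0 ≤ α) (hβ : 0 < β) (hu : ContDiff ℝ 2 u)
    (h0 : ∀ p ∈ StadiumBoundary α β, u p = 0) (l : ℝ) :
    ∫ p in Stadium α β, (3 / 4 * pdx u p ^ 2 - u p ^ 2 / (16 * (α + β) ^ 2)) ≤
      ∫ p in Stadium α β, (3 * (α + β) ^ 2 * helmholtz l u p ^ 2 + 2 * ((α + β) / β + 1) *
        (wingInd α p.1 * gradSq u p + l ^ 2 * (wingInd α p.1 * u p ^ 2))) := by
  have hcompact := isCompact_stadium hα hβ.le
  have hB : 0 < α + β := by positivity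
  have hu1 : ContDiff ℝ 1 u := hu.of_le one_le_two
  have huc := hu.continuous
  have hx := (contDiff_pdx hu1 (m := 0) (by norm_num)).continuous
  have hH := continuous_helmholtz hu l
  have hrellich := rellich_identity hcompact (convex_stadium hα hβ.le) (hasDerivAt_fieldStretch hα)
    ((continuous_const.sub ((continuous_wingCoord.pow 2).div_const _)).sub
      ((hasPiecewiseDeriv_fieldShear hα).continuous.const_mul 2))
    (hasPiecewiseDeriv_fieldShear hα)
    (fun g hg => stadium_divergence_mem_integralZero hα hβ hg) hu
    (eq_zero_of_mem_frontier_stadium hα hβ.le h0)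
    (fun p hp => fieldDeriv_eq_zero_of_mem_frontier hα hβ (hu.differentiable two_ne_zero) h0 hp) l
  refine integral_le_of_le_add_integralZero hrellich
    (integrableOn_stadium hα hβ.le (by fun_prop))
    ((integrableOn_stadium hα hβ.le (by fun_prop)).add
      (((integrableOn_stadium_wingInd_mul hα hβ.le (continuous_gradSq hu1)).add
        ((integrableOn_stadium_wingInd_mul hα hβ.le (huc.pow 2)).const_mul _)).const_mul _))
    ((ae_restrict_mem hcompact.measurableSet).mono fun p hp => ?_)
  have hi := wingInd_eq_zero_or_one α p.1
  have hc := fieldShear_nonneg (β := β) hα p.1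
  have hshear := fieldShear_mul_le hα hβ hp
  have hsnd : |fieldShear α β p.1 * p.2| ≤ (α + β) * wingInd α p.1 := by
    rw [abs_mul, abs_of_nonneg hc]
    exact (mul_le_mul_of_nonneg_left (abs_snd_le_of_mem_stadium hα hβ.le hp) hc).trans hshear
  have hcχ : fieldShear α β p.1 ≤ ((α + β) / β + 1) * wingInd α p.1 := by
    rw [← le_div_iff₀ hβ, mul_div_right_comm] at hshear
    rcases hi with h | h <;> rw [h] at hshear ⊢ <;> linarith
  simpa only [gradSq, fieldDeriv, ← mul_assoc] using
    rellich_integrand_le hB (le_add_of_nonneg_left (by positivity)) hi (by positivity)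
      (wingCoord_sq_div_le hα hβ hp) hc hcχ (abs_fieldShear_deriv_mul_le hα hβ hp) hsnd
      (abs_fieldStretch_le hα hβ hp) (l := l) (h := helmholtz l u p) (u := u p) (x := pdx u p)
      (y := pdy u p)

theorem integral_pdx_sq_le_wings (hα : 0 ≤ α) (hβ : 0 < β) (hu : ContDiff ℝ 2 u)
    (h0 : ∀ p ∈ StadiumBoundary α β, u p = 0) (l : ℝ) :
    ∫ p in Stadium α β, pdx u p ^ 2 ≤
      6 * (α + β) ^ 2 * (∫ p in Stadium α β, helmholtz l u p ^ 2) +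
        4 * ((α + β) / β + 1) *
          ((∫ p in Wings α β, gradSq u p) + l ^ 2 * ∫ p in Wings α β, u p ^ 2) := by
  have hB : 0 < α + β := by positivity
  have hu1 : ContDiff ℝ 1 u := hu.of_le one_le_two
  have hx := (contDiff_pdx hu1 (m := 0) (by norm_num)).continuous
  have hH := continuous_helmholtz hu l
  have huc := hu.continuous
  have hpoincare := integral_poincare_le (isCompact_stadium hα hβ.le) (convex_stadium hα hβ.le) hB
    (fun p hp => abs_fst_le_of_mem_stadium hα hβ.le hp) hu1
    (eq_zero_of_mem_frontier_stadium hα hβ.le h0)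
  have hrellich := stadium_rellich_estimate hα hβ hu h0 l
  have hG := integrableOn_stadium_wingInd_mul hα hβ.le (continuous_gradSq hu1)
  have hU : IntegrableOn (fun p => wingInd α p.1 * u p ^ 2) (Stadium α β) :=
    integrableOn_stadium_wingInd_mul hα hβ.le (huc.pow 2)
  have hGU : IntegrableOn
      (fun p => wingInd α p.1 * gradSq u p + l ^ 2 * (wingInd α p.1 * u p ^ 2)) (Stadium α β) :=
    hG.add (hU.const_mul _)
  rw [integral_sub (integrableOn_stadium hα hβ.le (by fun_prop))
      (integrableOn_stadium hα hβ.le (by fun_prop)), integral_const_mul, integral_div,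
    integral_add (integrableOn_stadium hα hβ.le (by fun_prop)) (hGU.const_mul _),
    integral_const_mul, integral_const_mul, integral_add hG (hU.const_mul _),
    integral_const_mul, ← setIntegral_wings hα hβ.le, ← setIntegral_wings hα hβ.le] at hrellich
  have hmass : (∫ p in Stadium α β, u p ^ 2) / (16 * (α + β) ^ 2) ≤
      (∫ p in Stadium α β, pdx u p ^ 2) / 4 := by
    rw [div_le_iff₀ (by positivity)]
    linarith
  linarith

end RellichEstimate

section EdgeHardy

/-- The distance from the edge `x = s * α` of the rectangle (for `s = 1` or `s = -1`) to the
projection of the abscissa `x` onto `[-α, α]`, regularized by `τ`. -/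
def edgeDist (α τ s x : ℝ) : ℝ := τ + (α - s * clamp α x)

/-- The inverse square weight of the Hardy inequality at the edges of the rectangle. -/
def hardyWeight (α τ x : ℝ) : ℝ := (edgeDist α τ 1 x ^ 2)⁻¹ + (edgeDist α τ (-1) x ^ 2)⁻¹

variable {α τ s x : ℝ}

lemma abs_clamp_le (hα : 0 ≤ α) (x : ℝ) : |clamp α x| ≤ α :=
  abs_le.2 ⟨le_max_left _ _, max_le (by linarith) (min_le_right _ _)⟩

lemma le_edgeDist (hα : 0 ≤ α) (hs : |s| ≤ 1) : τ ≤ edgeDist α τ s x := by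
  have hle : s * clamp α x ≤ 1 * α := (le_abs_self _).trans
    ((abs_mul _ _).trans_le (mul_le_mul hs (abs_clamp_le hα x) (abs_nonneg _) zero_le_one))
  rw [edgeDist]
  linarith

lemma hasPiecewiseDeriv_edgeDist (hα : 0 ≤ α) :
    HasPiecewiseDeriv (edgeDist α τ s) fun x => -s * (1 - wingInd α x) := by
  have hconst : HasPiecewiseDeriv (fun _ => τ + α) (fun _ => 0) :=
    .of_hasDerivAt (fun x => hasDerivAt_const x _) continuous_const
  convert hconst.add ((hasPiecewiseDeriv_clamp hα).const_mul (-s)) using 1 <;> ext x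
  · rw [edgeDist]; ring
  · rw [zero_add]

lemma hasPiecewiseDeriv_inv_edgeDist (hα : 0 ≤ α) (hτ : 0 < τ) (hs : |s| ≤ 1) :
    HasPiecewiseDeriv (fun x => (edgeDist α τ s x)⁻¹)
      fun x => s * (1 - wingInd α x) * (edgeDist α τ s x ^ 2)⁻¹ := by
  have hpos : ∀ x, edgeDist α τ s x ≠ 0 := fun x => (hτ.trans_le (le_edgeDist hα hs)).ne'
  have hedge := hasPiecewiseDeriv_edgeDist (τ := τ) (s := s) hα
  convert hedge.comp (g' := fun y => -(y ^ 2)⁻¹) (fun x => hasDerivAt_inv (hpos x))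
    (hedge.continuous.pow 2 |>.inv₀ fun x => pow_ne_zero 2 (hpos x)).neg using 2
  ring

lemma hardyWeight_nonneg : 0 ≤ hardyWeight α τ x := by unfold hardyWeight; positivity

lemma continuous_hardyWeight (hα : 0 ≤ α) (hτ : 0 < τ) : Continuous (hardyWeight α τ) := by
  have hedge : ∀ s, |s| ≤ 1 → Continuous fun x => (edgeDist α τ s x ^ 2)⁻¹ := fun s hs =>
    ((hasPiecewiseDeriv_edgeDist hα).continuous.pow 2).inv₀ fun x =>
      pow_ne_zero 2 (hτ.trans_le (le_edgeDist hα hs)).ne'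
  exact (hedge 1 (by simp)).add (hedge (-1) (by simp))

lemma hardyWeight_le (hα : 0 ≤ α) (hτ : 0 < τ) : hardyWeight α τ x ≤ 2 / τ ^ 2 := by
  have hedge : ∀ s, |s| ≤ 1 → (edgeDist α τ s x ^ 2)⁻¹ ≤ (τ ^ 2)⁻¹ := fun s hs =>
    inv_anti₀ (by positivity) (pow_le_pow_left₀ hτ.le (le_edgeDist hα hs) 2)
  rw [hardyWeight, div_eq_mul_inv, two_mul]
  exact add_le_add (hedge 1 (by simp)) (hedge (-1) (by simp))

lemma hasPiecewiseDeriv_inv_edgeDist_sub (hα : 0 ≤ α) (hτ : 0 < τ) :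
    HasPiecewiseDeriv (fun x => (edgeDist α τ 1 x)⁻¹ - (edgeDist α τ (-1) x)⁻¹)
      fun x => (1 - wingInd α x) * hardyWeight α τ x := by
  have hright := hasPiecewiseDeriv_inv_edgeDist (s := 1) hα hτ (by simp)
  have hleft := hasPiecewiseDeriv_inv_edgeDist (s := -1) hα hτ (by simp)
  convert hright.add (hleft.const_mul (-1)) using 2
  · ring
  · rw [hardyWeight]; ring

lemma half_hardyWeight_sub_le (hα : 0 ≤ α) (hτ : 0 < τ) :
    1 / 2 * hardyWeight α τ x - 2 / τ ^ 2 * wingInd α x ≤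
      (1 - wingInd α x) * hardyWeight α τ x -
        ((edgeDist α τ 1 x)⁻¹ - (edgeDist α τ (-1) x)⁻¹) ^ 2 / 2 := by
  have hright : 0 ≤ (edgeDist α τ 1 x)⁻¹ :=
    inv_nonneg.2 (hτ.le.trans (le_edgeDist hα (by simp)))
  have hleft : 0 ≤ (edgeDist α τ (-1) x)⁻¹ :=
    inv_nonneg.2 (hτ.le.trans (le_edgeDist hα (by simp)))
  have hsq : ((edgeDist α τ 1 x)⁻¹ - (edgeDist α τ (-1) x)⁻¹) ^ 2 ≤ hardyWeight α τ x := by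
    rw [hardyWeight, ← inv_pow, ← inv_pow]
    nlinarith [mul_nonneg hright hleft]
  have hle := hardyWeight_le (x := x) hα hτ
  rcases wingInd_eq_zero_or_one α x with h | h <;> rw [h] <;> linarith

theorem integral_hardyWeight_le {Ω : Set (ℝ × ℝ)} {u : ℝ × ℝ → ℝ} (hΩ : IsCompact Ω)
    (hconv : Convex ℝ Ω) (hu : ContDiff ℝ 1 u) (h0 : ∀ p ∈ frontier Ω, u p = 0)
    (hα : 0 ≤ α) (hτ : 0 < τ) :
    ∫ p in Ω, hardyWeight α τ p.1 * u p ^ 2 ≤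
      4 / τ ^ 2 * (∫ p in Ω, wingInd α p.1 * u p ^ 2) + 4 * ∫ p in Ω, pdx u p ^ 2 := by
  have hq := hasPiecewiseDeriv_inv_edgeDist_sub hα hτ
  have hhardy := integral_hardy_le hΩ hconv hq hu h0
  have husq : Continuous fun p => u p ^ 2 := hu.continuous.pow 2
  have hχ : IntegrableOn (fun p => wingInd α p.1 * u p ^ 2) Ω :=
    (hasPiecewiseDeriv_wingCoord hα).integrableOn_fst_mul hΩ husq
  have hw : IntegrableOn (fun p => hardyWeight α τ p.1 * u p ^ 2) Ω :=
    (((continuous_hardyWeight hα hτ).comp continuous_fst).mul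
      husq).continuousOn.integrableOn_compact hΩ
  have hupper : IntegrableOn (fun p => ((1 - wingInd α p.1) * hardyWeight α τ p.1 -
      ((edgeDist α τ 1 p.1)⁻¹ - (edgeDist α τ (-1) p.1)⁻¹) ^ 2 / 2) * u p ^ 2) Ω := by
    have hsq : Continuous fun p : ℝ × ℝ =>
        ((edgeDist α τ 1 p.1)⁻¹ - (edgeDist α τ (-1) p.1)⁻¹) ^ 2 / 2 :=
      ((hq.continuous.comp continuous_fst).pow 2).div_const 2
    simp only [sub_mul _ _ (u _ ^ 2)]
    exact (hq.integrableOn_fst_mul hΩ husq).sub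
      ((hsq.mul husq).continuousOn.integrableOn_compact hΩ)
  have hlower : ∫ p in Ω, (1 / 2 * (hardyWeight α τ p.1 * u p ^ 2) -
      2 / τ ^ 2 * (wingInd α p.1 * u p ^ 2)) ≤ _ :=
    integral_mono ((hw.const_mul _).sub (hχ.const_mul _)) hupper fun p => by
      linarith [mul_le_mul_of_nonneg_right (half_hardyWeight_sub_le (x := p.1) hα hτ)
        (sq_nonneg (u p))]
  rw [integral_sub (hw.const_mul _) (hχ.const_mul _), integral_const_mul, integral_const_mul]
    at hlower
  rw [show 4 / τ ^ 2 = 2 * (2 / τ ^ 2) by ring]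
  linarith [hlower.trans hhardy]

end EdgeHardy

section LogarithmicCutoff

/-- The logarithmic profile of the cutoff at scale `1 / √Λ`. Its slope is at most `2 / ρ`, and
`Λ` times the profile is at most `ρ⁻²`, so that the Hardy inequality controls both. -/
def logProfile (Λ ρ : ℝ) : ℝ := log (1 + (Λ * ρ ^ 2)⁻¹)

/-- The sum of the logarithmic profiles centred at the two edges of the rectangle; a small multiple
of it is the cutoff to a neighbourhood of the wings. -/
def edgeCutoff (α τ Λ x : ℝ) : ℝ :=
  logProfile Λ (edgeDist α τ 1 x) + logProfile Λ (edgeDist α τ (-1) x)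

/-- The derivative of `edgeCutoff α τ Λ` off the edges of the rectangle. -/
def edgeCutoffDeriv (α τ Λ x : ℝ) : ℝ :=
  (2 / (edgeDist α τ 1 x * (1 + Λ * edgeDist α τ 1 x ^ 2)) -
    2 / (edgeDist α τ (-1) x * (1 + Λ * edgeDist α τ (-1) x ^ 2))) * (1 - wingInd α x)

variable {α τ Λ ρ x : ℝ}

lemma logProfile_nonneg (hΛ : 0 ≤ Λ) : 0 ≤ logProfile Λ ρ :=
  log_nonneg (le_add_of_nonneg_right (by positivity))

lemma mul_logProfile_le (hΛ : 0 < Λ) : Λ * logProfile Λ ρ ≤ (ρ ^ 2)⁻¹ := by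
  have hlog : logProfile Λ ρ ≤ (Λ * ρ ^ 2)⁻¹ := by
    have hle := log_le_sub_one_of_pos (x := 1 + (Λ * ρ ^ 2)⁻¹) (by positivity)
    rwa [add_sub_cancel_left] at hle
  calc Λ * logProfile Λ ρ ≤ Λ * (Λ * ρ ^ 2)⁻¹ := mul_le_mul_of_nonneg_left hlog hΛ.le
    _ = (ρ ^ 2)⁻¹ := by rw [mul_inv, mul_inv_cancel_left₀ hΛ.ne']

lemma logProfile_le_of_le (hΛ : 0 < Λ) (hτ : 0 < τ) (hρ : τ ≤ ρ) :
    logProfile Λ ρ ≤ logProfile Λ τ :=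
  log_le_log (by positivity) (by gcongr)

lemma hasDerivAt_logProfile (hΛ : 0 < Λ) (hρ : 0 < ρ) :
    HasDerivAt (logProfile Λ) (-2 / (ρ * (1 + Λ * ρ ^ 2))) ρ := by
  have hne : Λ * ρ ^ 2 ≠ 0 := by positivity
  have harg : 1 + (Λ * ρ ^ 2)⁻¹ ≠ 0 := by positivity
  have hinv := (((hasDerivAt_pow 2 ρ).const_mul Λ).fun_inv hne).const_add 1
  refine (hinv.log harg).congr_deriv ?_
  rw [pow_one]
  field_simp
  ring

lemma hasPiecewiseDeriv_edgeCutoff (hα : 0 ≤ α) (hτ : 0 < τ) (hΛ : 0 < Λ) :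
    HasPiecewiseDeriv (edgeCutoff α τ Λ) (edgeCutoffDeriv α τ Λ) := by
  have hedge : ∀ s : ℝ, |s| ≤ 1 → HasPiecewiseDeriv (fun x => logProfile Λ (edgeDist α τ s x))
      fun x => -2 / (edgeDist α τ s x * (1 + Λ * edgeDist α τ s x ^ 2)) *
        (-s * (1 - wingInd α x)) := fun s hs => by
    have hpos : ∀ x, 0 < edgeDist α τ s x := fun x => hτ.trans_le (le_edgeDist hα hs)
    have hdist := hasPiecewiseDeriv_edgeDist (τ := τ) (s := s) hα
    have hc := hdist.continuous
    exact hdist.comp (g' := fun ρ => -2 / (ρ * (1 + Λ * ρ ^ 2)))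
      (fun x => hasDerivAt_logProfile hΛ (hpos x))
      (continuous_const.div (by fun_prop) fun x => by have := hpos x; positivity)
  convert (hedge 1 (by simp)).add (hedge (-1) (by simp)) using 1 <;> ext x
  · rw [edgeCutoff]
  · rw [edgeCutoffDeriv]
    ring

lemma edgeCutoffDeriv_sq_le (hα : 0 ≤ α) (hτ : 0 < τ) (hΛ : 0 < Λ) :
    edgeCutoffDeriv α τ Λ x ^ 2 ≤ 4 * hardyWeight α τ x := by
  have hedge : ∀ ρ : ℝ, τ ≤ ρ → 0 ≤ 2 / (ρ * (1 + Λ * ρ ^ 2)) ∧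
      (2 / (ρ * (1 + Λ * ρ ^ 2))) ^ 2 ≤ 4 * (ρ ^ 2)⁻¹ := fun ρ hρ => by
    have hρ0 : 0 < ρ := hτ.trans_le hρ
    refine ⟨by positivity, ?_⟩
    calc (2 / (ρ * (1 + Λ * ρ ^ 2))) ^ 2 ≤ (2 / ρ) ^ 2 := by
          gcongr
          exact le_mul_of_one_le_right hρ0.le (le_add_of_nonneg_right (by positivity))
      _ = 4 * (ρ ^ 2)⁻¹ := by ring
  obtain ⟨hright, hright_sq⟩ := hedge _ (le_edgeDist (x := x) hα (s := 1) (by simp))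
  obtain ⟨hleft, hleft_sq⟩ := hedge _ (le_edgeDist (x := x) hα (s := -1) (by simp))
  have hw := hardyWeight_nonneg (α := α) (τ := τ) (x := x)
  rw [edgeCutoffDeriv]
  rcases wingInd_eq_zero_or_one α x with h | h <;> rw [h]
  · rw [hardyWeight]
    nlinarith [mul_nonneg hright hleft]
  · linarith

lemma mul_edgeCutoff_le (hΛ : 0 < Λ) : Λ * edgeCutoff α τ Λ x ≤ hardyWeight α τ x := by
  rw [edgeCutoff, mul_add, hardyWeight]
  exact add_le_add (mul_logProfile_le hΛ) (mul_logProfile_le hΛ)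

lemma edgeCutoff_nonneg (hΛ : 0 ≤ Λ) : 0 ≤ edgeCutoff α τ Λ x :=
  add_nonneg (logProfile_nonneg hΛ) (logProfile_nonneg hΛ)

lemma edgeCutoff_le (hα : 0 ≤ α) (hτ : 0 < τ) (hΛ : 0 < Λ) :
    edgeCutoff α τ Λ x ≤ 2 * logProfile Λ τ := by
  rw [edgeCutoff, two_mul]
  exact add_le_add (logProfile_le_of_le hΛ hτ (le_edgeDist hα (by simp)))
    (logProfile_le_of_le hΛ hτ (le_edgeDist hα (by simp)))

lemma wingInd_mul_logProfile_le (hα : 0 ≤ α) (hΛ : 0 ≤ Λ) :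
    wingInd α x * logProfile Λ τ ≤ edgeCutoff α τ Λ x := by
  rcases clamp_wingInd_cases hα x with ⟨-, hc, hi⟩ | ⟨-, hc, hi⟩ | ⟨-, -, hi⟩ <;> rw [hi]
  · have hdist : edgeDist α τ 1 x = τ := by rw [edgeDist, hc]; ring
    rw [edgeCutoff, hdist, one_mul]
    exact le_add_of_nonneg_right (logProfile_nonneg hΛ)
  · have hdist : edgeDist α τ (-1) x = τ := by rw [edgeDist, hc]; ring
    rw [edgeCutoff, hdist, one_mul]
    exact le_add_of_nonneg_left (logProfile_nonneg hΛ)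
  · rw [zero_mul]
    exact edgeCutoff_nonneg hΛ

lemma exists_logProfile_eq (hΛ : 0 < Λ) {t : ℝ} (ht : 0 < t) :
    ∃ τ > 0, logProfile Λ τ = t ∧ (τ ^ 2)⁻¹ = Λ * (exp t - 1) := by
  have hpos : 0 < Λ * (exp t - 1) := mul_pos hΛ (sub_pos.2 (one_lt_exp_iff.2 ht))
  have hsq : (√(Λ * (exp t - 1))⁻¹ ^ 2)⁻¹ = Λ * (exp t - 1) := by
    rw [sq_sqrt (inv_nonneg.2 hpos.le), inv_inv]
  refine ⟨√(Λ * (exp t - 1))⁻¹, sqrt_pos.2 (inv_pos.2 hpos), ?_, hsq⟩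
  rw [logProfile, mul_inv, hsq, inv_mul_cancel_left₀ hΛ.ne', add_sub_cancel, log_exp]

variable {Ω : Set (ℝ × ℝ)} {u : ℝ × ℝ → ℝ} {φ φ' w : ℝ → ℝ} {ε l : ℝ}

theorem integral_mul_gradSq_le (hΩ : IsCompact Ω) (hconv : Convex ℝ Ω)
    (hφ : HasPiecewiseDeriv φ φ') (hu : ContDiff ℝ 2 u) (h0 : ∀ p ∈ frontier Ω, u p = 0)
    (hε : 0 < ε) (hw : Continuous w) (hφ0 : ∀ x, 0 ≤ φ x) (hφ2 : ∀ x, φ x ≤ 2)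
    (hφw : ∀ x, (1 + l ^ 2) * φ x ≤ ε * w x) (hφ'w : ∀ x, φ' x ^ 2 ≤ 4 * ε ^ 2 * w x) :
    ∫ p in Ω, φ p.1 * gradSq u p ≤ 2 * ε * (∫ p in Ω, w p.1 * u p ^ 2) +
      ε * (∫ p in Ω, pdx u p ^ 2) + 1 / 2 * ∫ p in Ω, helmholtz l u p ^ 2 := by
  have hint : ∀ F : ℝ × ℝ → ℝ, Continuous F → IntegrableOn F Ω :=
    fun F hF => hF.continuousOn.integrableOn_compact hΩ
  have hu1 : ContDiff ℝ 1 u := hu.of_le one_le_two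
  have hwu := (hint (fun p => w p.1 * u p ^ 2)
    ((hw.comp continuous_fst).mul (hu.continuous.pow 2))).const_mul (2 * ε)
  have hux := (hint (fun p => pdx u p ^ 2)
    ((contDiff_pdx hu1 (m := 0) (by norm_num)).continuous.pow 2)).const_mul ε
  have hh := (hint (fun p => helmholtz l u p ^ 2)
    ((continuous_helmholtz hu l).pow 2)).const_mul (1 / 2)
  have hG := hint (fun p => φ p.1 * gradSq u p)
    ((hφ.continuous.comp continuous_fst).mul (continuous_gradSq hu1))
  simp only [← integral_const_mul]
  rw [← integral_add hwu hux, ← integral_add (hwu.fun_add hux) hh]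
  refine integral_le_of_le_add_integralZero (energy_identity hΩ hconv hφ hu h0) hG
    ((hwu.fun_add hux).fun_add hh) (ae_of_all _ fun p => ?_)
  have hlap : lap u p = helmholtz l u p + l ^ 2 * u p := by rw [helmholtz]; ring
  have hyoung : 0 ≤ φ' p.1 * (u p * pdx u p) + ε * pdx u p ^ 2 + ε * w p.1 * u p ^ 2 := by
    refine nonneg_of_mul_nonneg_right (a := 4 * ε) ?_ (by positivity)
    nlinarith [sq_nonneg (2 * ε * pdx u p + φ' p.1 * u p),
      mul_le_mul_of_nonneg_right (hφ'w p.1) (sq_nonneg (u p))]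
  have hsource : φ p.1 * u p * helmholtz l u p ≤ 1 / 2 * helmholtz l u p ^ 2 + φ p.1 * u p ^ 2 := by
    nlinarith [sq_nonneg (helmholtz l u p - φ p.1 * u p),
      mul_nonneg (mul_nonneg (hφ0 p.1) (sub_nonneg.2 (hφ2 p.1))) (sq_nonneg (u p))]
  have hpotential := mul_le_mul_of_nonneg_right (hφw p.1) (sq_nonneg (u p))
  rw [hlap]
  linarith

theorem integral_wingInd_mul_gradSq_le (hΩ : IsCompact Ω) (hconv : Convex ℝ Ω)
    (hu : ContDiff ℝ 2 u) (h0 : ∀ p ∈ frontier Ω, u p = 0) (hα : 0 ≤ α) (hε : 0 < ε) (l : ℝ) :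
    ∫ p in Ω, wingInd α p.1 * gradSq u p ≤ 9 * ε * (∫ p in Ω, pdx u p ^ 2) +
      8 * ε * (exp ε⁻¹ - 1) * ((1 + l ^ 2) * ∫ p in Ω, wingInd α p.1 * u p ^ 2) +
      1 / 2 * ∫ p in Ω, helmholtz l u p ^ 2 := by
  have hΛ : 0 < 1 + l ^ 2 := by positivity
  obtain ⟨τ, hτ, hlog, hτsq⟩ := exists_logProfile_eq hΛ (inv_pos.2 hε)
  have hu1 : ContDiff ℝ 1 u := hu.of_le one_le_two
  have hcut := hasPiecewiseDeriv_edgeCutoff hα hτ hΛ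
  have henergy := integral_mul_gradSq_le hΩ hconv (hcut.const_mul ε) hu h0 hε
    (continuous_hardyWeight hα hτ) (l := l)
    (fun x => mul_nonneg hε.le (edgeCutoff_nonneg hΛ.le))
    (fun x => by
      have hle := mul_le_mul_of_nonneg_left (edgeCutoff_le (x := x) hα hτ hΛ) hε.le
      rwa [hlog, mul_left_comm, mul_inv_cancel₀ hε.ne', mul_one] at hle)
    (fun x => by
      rw [mul_left_comm]
      exact mul_le_mul_of_nonneg_left (mul_edgeCutoff_le hΛ) hε.le)
    (fun x => by nlinarith [edgeCutoffDeriv_sq_le (x := x) hα hτ hΛ, sq_nonneg ε])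
  have hcutoff : ∫ p in Ω, wingInd α p.1 * gradSq u p ≤
      ∫ p in Ω, ε * edgeCutoff α τ (1 + l ^ 2) p.1 * gradSq u p := by
    refine integral_mono ((hasPiecewiseDeriv_wingCoord hα).integrableOn_fst_mul hΩ
      (continuous_gradSq hu1)) ((((hcut.continuous.comp continuous_fst).const_mul ε).mul
      (continuous_gradSq hu1)).continuousOn.integrableOn_compact hΩ) fun p =>
      mul_le_mul_of_nonneg_right ?_ (add_nonneg (sq_nonneg _) (sq_nonneg _))
    have hle := mul_le_mul_of_nonneg_left
      (wingInd_mul_logProfile_le (τ := τ) (x := p.1) hα hΛ.le) hε.le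
    rwa [hlog, mul_left_comm, mul_inv_cancel₀ hε.ne', mul_one] at hle
  have hhardy := mul_le_mul_of_nonneg_left (integral_hardyWeight_le hΩ hconv hu1 h0 hα hτ)
    (by positivity : 0 ≤ 2 * ε)
  rw [div_eq_mul_inv, hτsq] at hhardy
  linarith

end LogarithmicCutoff

section SmoothExtension

variable {E F : Type*} [NormedAddCommGroup E] [NormedSpace ℝ E] [FiniteDimensional ℝ E]
  [NormedAddCommGroup F] [NormedSpace ℝ F]

theorem exists_contDiff_eventuallyEq {n : ℕ∞} {s V : Set E} {u : E → F} (hs : IsClosed s)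
    (hV : IsOpen V) (hsV : s ⊆ V) (hu : ContDiffOn ℝ n u V) :
    ∃ v : E → F, ContDiff ℝ n v ∧ ∀ p ∈ s, v =ᶠ[nhds p] u := by
  obtain ⟨χ, hχ0, hχ1, -⟩ := exists_contMDiffMap_zero_one_nhds_of_isClosed (n := n)
    (modelWithCornersSelf ℝ E) hV.isClosed_compl hs (disjoint_compl_left_iff_subset.2 hsV)
  rw [eventually_nhdsSet_iff_forall] at hχ0 hχ1
  refine ⟨fun p => χ p • u p, contDiff_iff_contDiffAt.2 fun p => ?_, fun p hp => ?_⟩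
  · by_cases hp : p ∈ V
    · exact χ.contMDiff.contDiff.contDiffAt.smul (hu.contDiffAt (hV.mem_nhds hp))
    · refine (contDiffAt_const (c := (0 : F))).congr_of_eventuallyEq ?_
      filter_upwards [hχ0 p hp] with q hq
      rw [hq, zero_smul]
  · filter_upwards [hχ1 p hp] with q hq
    rw [hq, one_smul]

end SmoothExtension

section Observability

variable {α β : ℝ}

lemma stadiumBoundary_subset_stadium (hβ : 0 ≤ β) : StadiumBoundary α β ⊆ Stadium α β := by
  rintro ⟨x, y⟩ (⟨hx, hy⟩ | ⟨hp, hx⟩)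
  · refine .inl ⟨abs_le.1 hx, abs_le.1 ?_⟩
    rcases hy with rfl | rfl
    · exact (abs_of_nonneg hβ).le
    · exact (abs_neg β).trans_le (abs_of_nonneg hβ).le
  · rcases abs_cases x with ⟨habs, -⟩ | ⟨habs, -⟩ <;> rw [habs] at hp hx
    · exact .inr (.inl ⟨hp.le, hx⟩)
    · exact .inr (.inr ⟨by linarith, le_neg_of_le_neg hx⟩)

theorem exists_integral_pdx_sq_le_wings (hα : 0 ≤ α) (hβ : 0 < β) :
    ∃ A > 0, ∀ (l : ℝ) (u : ℝ × ℝ → ℝ), ContDiff ℝ 2 u → (∀ p ∈ StadiumBoundary α β, u p = 0) →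
      ∫ p in Stadium α β, pdx u p ^ 2 ≤ A *
        ((∫ p in Stadium α β, helmholtz l u p ^ 2) + (1 + l ^ 2) * ∫ p in Wings α β, u p ^ 2) := by
  set D := (α + β) / β + 1
  have hD : 0 < D := by positivity
  -- With this `ε` the cutoff estimate returns at most half of the left-hand side.
  set ε := (72 * D)⁻¹ with hεD
  have hε : 0 < ε := by positivity
  set K := 8 * ε * (exp ε⁻¹ - 1)
  have hK : 0 < K := mul_pos (by positivity) (sub_pos.2 (one_lt_exp_iff.2 (inv_pos.2 hε)))
  refine ⟨2 * (6 * (α + β) ^ 2 + 2 * D + 4 * D * (K + 1)), by positivity, fun l u hu h0 => ?_⟩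
  have hrellich := integral_pdx_sq_le_wings hα hβ hu h0 l
  have hcutoff := integral_wingInd_mul_gradSq_le (isCompact_stadium hα hβ.le)
    (convex_stadium hα hβ.le) hu (eq_zero_of_mem_frontier_stadium hα hβ.le h0) hα hε l
  rw [← setIntegral_wings hα hβ.le, ← setIntegral_wings hα hβ.le] at hcutoff
  set M := ∫ p in Stadium α β, helmholtz l u p ^ 2
  set X := ∫ p in Stadium α β, pdx u p ^ 2
  set U := ∫ p in Wings α β, u p ^ 2
  have hM : 0 ≤ M := integral_nonneg fun p => sq_nonneg _
  have hU : 0 ≤ U := integral_nonneg fun p => sq_nonneg _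
  have habsorb : 4 * D * (9 * ε * X) = X / 2 := by
    rw [hεD]
    field_simp
    ring
  have hX : X / 2 ≤ (6 * (α + β) ^ 2 + 2 * D) * M + 4 * D * (K + 1) * ((1 + l ^ 2) * U) := by
    linarith [mul_le_mul_of_nonneg_left hcutoff (by positivity : 0 ≤ 4 * D), mul_nonneg hD.le hU]
  have hcrossM : 0 ≤ 4 * D * (K + 1) * M := mul_nonneg (by positivity) hM
  have hcrossU : 0 ≤ (6 * (α + β) ^ 2 + 2 * D) * ((1 + l ^ 2) * U) := by positivity
  linarith

theorem exists_mul_integral_sq_le_wings_of_contDiff (hα : 0 ≤ α) (hβ : 0 < β) :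
    ∃ C > 0, ∀ (l : ℝ) (u : ℝ × ℝ → ℝ), ContDiff ℝ 2 u → (∀ p ∈ StadiumBoundary α β, u p = 0) →
      C * (∫ p in Stadium α β, u p ^ 2) ≤
        (∫ p in Stadium α β, helmholtz l u p ^ 2) + (1 + l ^ 2) * ∫ p in Wings α β, u p ^ 2 := by
  obtain ⟨A, hA, hpdx⟩ := exists_integral_pdx_sq_le_wings hα hβ
  have hB : 0 < α + β := by positivity
  have hAB : 0 < 4 * (α + β) ^ 2 * A := by positivity
  refine ⟨(4 * (α + β) ^ 2 * A)⁻¹, inv_pos.2 hAB, fun l u hu h0 => (inv_mul_le_iff₀ hAB).2 ?_⟩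
  have hpoincare := integral_poincare_le (isCompact_stadium hα hβ.le) (convex_stadium hα hβ.le) hB
    (fun p hp => abs_fst_le_of_mem_stadium hα hβ.le hp) (hu.of_le one_le_two)
    (eq_zero_of_mem_frontier_stadium hα hβ.le h0)
  rw [mul_assoc]
  exact hpoincare.trans (mul_le_mul_of_nonneg_left (hpdx l u hu h0) (by positivity))

lemma QMDatum.exists_contDiff (hα : 0 ≤ α) (hβ : 0 ≤ β) (d : QMDatum α β) :
    ∃ v : ℝ × ℝ → ℝ, ContDiff ℝ 2 v ∧ EqOn v d.u (Stadium α β) ∧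
      EqOn (helmholtz d.lam v) d.f (Stadium α β) := by
  obtain ⟨V, hV, hSV, hu⟩ := d.smooth
  obtain ⟨v, hv, hvu⟩ :=
    exists_contDiff_eventuallyEq (isCompact_stadium hα hβ).isClosed hV hSV hu
  have heq : EqOn v d.u (Stadium α β) := fun p hp => (hvu p hp).eq_of_nhds
  refine ⟨v, contDiff_infty.1 hv 2, heq, fun p hp => ?_⟩
  rw [helmholtz, lap_congr (hvu p hp), heq hp, d.eqn p hp]

theorem QMDatum.exists_mul_integral_sq_le_wings (hα : 0 ≤ α) (hβ : 0 < β) :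
    ∃ C > 0, ∀ d : QMDatum α β,
      C * (∫ p in Stadium α β, d.u p ^ 2) ≤
        (∫ p in Stadium α β, d.f p ^ 2) + (1 + d.lam ^ 2) * ∫ p in Wings α β, d.u p ^ 2 := by
  obtain ⟨C, hC, hobs⟩ := exists_mul_integral_sq_le_wings_of_contDiff hα hβ
  refine ⟨C, hC, fun d => ?_⟩
  obtain ⟨v, hv, hvu, hvf⟩ := d.exists_contDiff hα hβ.le
  have hmeas := (isCompact_stadium hα hβ.le).measurableSet
  have h := hobs d.lam v hv fun p hp =>
    (hvu (stadiumBoundary_subset_stadium hβ.le hp)).trans (d.dirichlet p hp)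
  rw [setIntegral_wings hα hβ.le] at h ⊢
  rwa [setIntegral_congr_fun hmeas fun p hp => congrArg (· ^ 2) (hvu hp),
    setIntegral_congr_fun hmeas fun p hp => congrArg (· ^ 2) (hvf hp),
    setIntegral_congr_fun hmeas fun p hp => congrArg (wingInd α p.1 * · ^ 2) (hvu hp)] at h

theorem stmt2_general (hα : 0 ≤ α) (hβ : 0 < β) {lam₀ : ℝ} (hlam₀ : 0 < lam₀) :
    ∃ C > 0, ∀ d : QMDatum α β, lam₀ ≤ d.lam →
      C * (∫ p in Stadium α β, d.u p ^ 2) ≤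
        d.lam ^ 2 * (∫ p in Stadium α β, d.f p ^ 2) +
          d.lam ^ 4 * ∫ p in Wings α β, d.u p ^ 2 := by
  obtain ⟨C, hC, hobs⟩ := QMDatum.exists_mul_integral_sq_le_wings hα hβ
  set k := lam₀ ^ 4 / (1 + lam₀ ^ 2)
  have hk : 0 < k := by positivity
  refine ⟨k * C, mul_pos hk hC, fun d hd => ?_⟩
  have hsq : lam₀ ^ 2 ≤ d.lam ^ 2 := pow_le_pow_left₀ hlam₀.le hd 2
  have hksource : k ≤ d.lam ^ 2 := by
    rw [div_le_iff₀ (by positivity)]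
    nlinarith [sq_nonneg lam₀]
  have hkmass : k * (1 + d.lam ^ 2) ≤ d.lam ^ 4 := by
    rw [div_mul_eq_mul_div, div_le_iff₀ (by positivity)]
    nlinarith [mul_nonneg (sq_nonneg lam₀) (sq_nonneg d.lam)]
  calc k * C * (∫ p in Stadium α β, d.u p ^ 2)
      ≤ k * ((∫ p in Stadium α β, d.f p ^ 2) + (1 + d.lam ^ 2) * ∫ p in Wings α β, d.u p ^ 2) := by
        rw [mul_assoc]
        exact mul_le_mul_of_nonneg_left (hobs d) hk.le
    _ = k * (∫ p in Stadium α β, d.f p ^ 2) +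
          k * (1 + d.lam ^ 2) * ∫ p in Wings α β, d.u p ^ 2 := by ring
    _ ≤ _ := by gcongr

end Observability

/-- There are `C > 0` and `λ₀ > 0` depending only on `α, β` such that every
real Dirichlet quasimode datum with `λ ≥ λ₀` and `‖u‖_{L²(S)} = 1` satisfies
`λ² ‖f‖²_{L²(S)} + λ⁴ ‖u‖²_{L²(W)} ≥ C`. -/
theorem stmt2 (α β : ℝ) (hα : 0 < α) (hβ : 0 < β) :
    ∃ C > 0, ∃ lam₀ > 0, ∀ d : QMDatum α β, d.lam ≥ lam₀ →
      (∫ p in Stadium α β, (d.u p) ^ 2) = 1 →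
      d.lam ^ 2 * (∫ p in Stadium α β, (d.f p) ^ 2) +
        d.lam ^ 4 * (∫ p in Wings α β, (d.u p) ^ 2) ≥ C := by
  obtain ⟨C, hC, hobs⟩ := stmt2_general hα.le hβ one_pos
  exact ⟨C, hC, 1, one_pos, fun d hd hnorm => by simpa only [hnorm, mul_one] using hobs d hd⟩
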